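/- arXiv:1204.4694 — 2 statements merged into one kernel-verified Lean document; each statement's English description precedes it below -/
import Mathlib

section
/- Fix n ≥ 1 and a Hamiltonian H as in the context, and let a, τ, z be a C^∞ solution of the half-cylinder problem of period n (periodicity, Cauchy–Riemann part, disk part and boundary conditions as in the context) whose λ-energy E_λ is finite. Then in fact E_λ = n; moreover, writing (by the finite-λ-energy normal form) a(s,t) = s + a₀ and τ(s,t) = t + τ₀, the ω-energy E_ω := ∫_0^∞ ∫_0^n [ (∂_s x·∂_t y − ∂_t x·∂_s y) + (∂_s τ·∂_t(H(τ,z)) − ∂_t τ·∂_s(H(τ,z))) ] dt ds (where z = x + iy) equals the Floer energy (1/2)·∫_0^∞ ∫_0^n |∂_s z(s,t)|² + |∂_t z(s,t) − X_H(t+τ₀, z(s,t))|² dt ds. -/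
open Complex Set MeasureTheory ENNReal

def Disk : Set ℂ := Metric.closedBall 0 1

/-- The Hamiltonian vector field `X_H(t,z) = (−∂_y H, ∂_x H)`, written in complex
notation as `i · (∂_x H + i ∂_y H)`. -/
noncomputable def XH (H : ℝ → ℂ → ℝ) (t : ℝ) (w : ℂ) : ℂ :=
  Complex.I * ((fderiv ℝ (H t) w 1 : ℝ) + (fderiv ℝ (H t) w Complex.I : ℝ) * Complex.I)

/-- Admissible Hamiltonians: smooth, 1-periodic in time, constant on the boundary circle. -/
structure IsAdmissible (H : ℝ → ℂ → ℝ) : Prop where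
  smooth : ContDiff ℝ (⊤ : ℕ∞) (fun p : ℝ × ℂ => H p.1 p.2)
  periodic : ∀ (t : ℝ) (z : ℂ), H (t + 1) z = H t z
  bdry_const : ∀ (t : ℝ), ∀ z w : ℂ, ‖z‖ = 1 → ‖w‖ = 1 → H t z = H t w

/-- The half cylinder `[0,∞) × ℝ`. -/
def HalfPlane : Set (ℝ × ℝ) := Set.Ici (0:ℝ) ×ˢ Set.univ

/-- Partial derivative in the `s`-direction, taken within a set `A`. -/
noncomputable def pds {E : Type*} [NormedAddCommGroup E] [NormedSpace ℝ E]
    (A : Set (ℝ × ℝ)) (f : ℝ × ℝ → E) (p : ℝ × ℝ) : E :=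
  fderivWithin ℝ f A p (1, 0)

/-- Partial derivative in the `t`-direction, taken within a set `A`. -/
noncomputable def pdt {E : Type*} [NormedAddCommGroup E] [NormedSpace ℝ E]
    (A : Set (ℝ × ℝ)) (f : ℝ × ℝ → E) (p : ℝ × ℝ) : E :=
  fderivWithin ℝ f A p (0, 1)

/-- The `λ`-energy of a half cylinder of period `n`:
`E_λ = sup_ψ ∫_0^∞ ∫_0^n ψ(a) (∂_s a ∂_t τ − ∂_t a ∂_s τ) dt ds`, the supremum over all
smooth `ψ : ℝ → [0,∞)` with `∫ ψ = 1`. -/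
noncomputable def lambdaEnergy (n : ℕ) (a τ : ℝ × ℝ → ℝ) : ℝ≥0∞ :=
  ⨆ ψ ∈ {ψ : ℝ → ℝ | ContDiff ℝ (⊤ : ℕ∞) ψ ∧ (∀ x, 0 ≤ ψ x) ∧ ∫ x : ℝ, ψ x = 1},
    ∫⁻ p in Set.Ici (0:ℝ) ×ˢ Set.Ioc (0:ℝ) (n:ℝ),
      ENNReal.ofReal (ψ (a p) *
        (pds HalfPlane a p * pdt HalfPlane τ p - pdt HalfPlane a p * pds HalfPlane τ p))

/-- The `ω`-energy
`E_ω = ∫_0^∞ ∫_0^n (∂_s x ∂_t y − ∂_t x ∂_s y) + (∂_s τ ∂_t(H(τ,z)) − ∂_t τ ∂_s(H(τ,z))) dt ds`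
where `z = x + i y`. -/
noncomputable def omegaEnergy (H : ℝ → ℂ → ℝ) (n : ℕ) (τ : ℝ × ℝ → ℝ)
    (z : ℝ × ℝ → ℂ) : ℝ≥0∞ :=
  ∫⁻ p in Set.Ici (0:ℝ) ×ˢ Set.Ioc (0:ℝ) (n:ℝ),
    ENNReal.ofReal
      ((pds HalfPlane (fun q => (z q).re) p * pdt HalfPlane (fun q => (z q).im) p -
        pdt HalfPlane (fun q => (z q).re) p * pds HalfPlane (fun q => (z q).im) p) +
       (pds HalfPlane τ p * pdt HalfPlane (fun q => H (τ q) (z q)) p -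
        pdt HalfPlane τ p * pds HalfPlane (fun q => H (τ q) (z q)) p))

/-- The Floer energy
`(1/2) ∫_0^∞ ∫_0^n |∂_s z|² + |∂_t z − X_H(t+τ₀, z)|² dt ds`. -/
noncomputable def floerEnergy (H : ℝ → ℂ → ℝ) (n : ℕ) (τ₀ : ℝ)
    (z : ℝ × ℝ → ℂ) : ℝ≥0∞ :=
  (1/2 : ℝ≥0∞) *
    ∫⁻ p in Set.Ici (0:ℝ) ×ˢ Set.Ioc (0:ℝ) (n:ℝ),
      ENNReal.ofReal (‖pds HalfPlane z p‖ ^ 2 +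
        ‖pdt HalfPlane z p - XH H (p.2 + τ₀) (z p)‖ ^ 2)

section helpers

lemma halfPlane_mem {p : ℝ × ℝ} : p ∈ HalfPlane ↔ 0 ≤ p.1 := by simp [HalfPlane]

lemma halfPlane_nhds {p : ℝ × ℝ} (hp : 0 < p.1) : HalfPlane ∈ nhds p := by
  have : IsOpen {q : ℝ × ℝ | 0 < q.1} := isOpen_lt continuous_const continuous_fst
  filter_upwards [this.mem_nhds hp] with q hq
  exact halfPlane_mem.2 (le_of_lt hq)

lemma halfPlane_uniqueDiff : UniqueDiffOn ℝ HalfPlane :=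
  (uniqueDiffOn_Ici 0).prod uniqueDiffOn_univ

lemma halfPlane_convex : Convex ℝ HalfPlane := (convex_Ici 0).prod convex_univ

lemma contDiffOn_pd {E : Type*} [NormedAddCommGroup E] [NormedSpace ℝ E] {f : ℝ × ℝ → E}
    (hf : ContDiffOn ℝ (⊤ : ℕ∞) f HalfPlane) (v : ℝ × ℝ) :
    ContDiffOn ℝ (⊤ : ℕ∞) (fun p => fderivWithin ℝ f HalfPlane p v) HalfPlane :=
  (hf.fderivWithin halfPlane_uniqueDiff (by simp)).clm_apply contDiffOn_const

lemma hasFDerivAt_of_contDiffOn {E : Type*} [NormedAddCommGroup E] [NormedSpace ℝ E]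
    {f : ℝ × ℝ → E} (hf : ContDiffOn ℝ (⊤ : ℕ∞) f HalfPlane) {p : ℝ × ℝ} (hp : 0 < p.1) :
    HasFDerivAt f (fderivWithin ℝ f HalfPlane p) p := by
  have h : DifferentiableWithinAt ℝ f HalfPlane p :=
    (hf.differentiableOn (by simp)) p (halfPlane_mem.2 hp.le)
  exact h.hasFDerivWithinAt.hasFDerivAt (halfPlane_nhds hp)

lemma pd_symm {f : ℝ × ℝ → ℝ} (hf : ContDiffOn ℝ (⊤ : ℕ∞) f HalfPlane) {p : ℝ × ℝ}
    (hp : 0 < p.1) (v w : ℝ × ℝ) :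
    fderivWithin ℝ (fun q => fderivWithin ℝ f HalfPlane q v) HalfPlane p w =
    fderivWithin ℝ (fun q => fderivWithin ℝ f HalfPlane q w) HalfPlane p v := by
  have hd : ContDiffOn ℝ (⊤ : ℕ∞) (fderivWithin ℝ f HalfPlane) HalfPlane :=
    hf.fderivWithin halfPlane_uniqueDiff (by simp)
  have hd' := hasFDerivAt_of_contDiffOn hd hp
  have key : ∀ v : ℝ × ℝ, fderivWithin ℝ (fun q => fderivWithin ℝ f HalfPlane q v) HalfPlane p
      = (fderivWithin ℝ (fderivWithin ℝ f HalfPlane) HalfPlane p).flip v := by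
    intro v
    rw [fderivWithin_of_mem_nhds (halfPlane_nhds hp)]
    have := hd'.clm_apply (hasFDerivAt_const v p)
    rw [this.fderiv]; simp
  rw [key, key]
  have ho : IsOpen {q : ℝ × ℝ | 0 < q.1} := isOpen_lt continuous_const continuous_fst
  have := second_derivative_symmetric_of_eventually (f := f) (f' := fderivWithin ℝ f HalfPlane)
    (x := p) (by
      filter_upwards [ho.mem_nhds hp] with q hq
      exact hasFDerivAt_of_contDiffOn hf hq) hd'
  exact this w v

lemma div_lemma {E : Type*} [NormedAddCommGroup E] [NormedSpace ℝ E] [CompleteSpace E]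
    (P Q r : ℝ × ℝ → E) (P' Q' : ℝ × ℝ → ℝ × ℝ →L[ℝ] E) (s₁ s₂ n : ℝ)
    (h₁ : 0 ≤ s₁) (h₂ : s₁ ≤ s₂) (hn : 0 ≤ n)
    (hP : ContinuousOn P HalfPlane) (hQ : ContinuousOn Q HalfPlane) (hr : ContinuousOn r HalfPlane)
    (hP' : ∀ p : ℝ × ℝ, 0 < p.1 → HasFDerivAt P (P' p) p)
    (hQ' : ∀ p : ℝ × ℝ, 0 < p.1 → HasFDerivAt Q (Q' p) p)
    (hdiv : ∀ p : ℝ × ℝ, 0 < p.1 → P' p (1, 0) + Q' p (0, 1) = r p)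
    (hper : ∀ s, 0 ≤ s → Q (s, n) = Q (s, 0)) :
    ∫ x in Icc (s₁, (0:ℝ)) (s₂, n), r x =
      (∫ y in (0:ℝ)..n, P (s₂, y)) - ∫ y in (0:ℝ)..n, P (s₁, y) := by
  classical
  have hsub : Icc (s₁, (0:ℝ)) (s₂, n) ⊆ HalfPlane := fun p hp =>
    halfPlane_mem.2 (h₁.trans hp.1.1)
  set P'' : ℝ × ℝ → ℝ × ℝ →L[ℝ] E := fun p => if 0 < p.1 then P' p else
    (ContinuousLinearMap.fst ℝ ℝ ℝ).smulRight (r p) with hP''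
  set Q'' : ℝ × ℝ → ℝ × ℝ →L[ℝ] E := fun p => if 0 < p.1 then Q' p else 0 with hQ''
  have hr' : ∀ p, P'' p (1, 0) + Q'' p (0, 1) = r p := by
    intro p
    by_cases hp : 0 < p.1
    · simp [hP'', hQ'', hp, hdiv p hp]
    · simp [hP'', hQ'', hp]
  have := integral_divergence_prod_Icc_of_hasFDerivAt_of_le P Q P'' Q'' (s₁, 0) (s₂, n)
    ⟨h₂, hn⟩ (hP.mono hsub) (hQ.mono hsub)
    (fun p hp => by
      have : 0 < p.1 := h₁.trans_lt hp.1.1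
      simpa [hP'', this] using hP' p this)
    (fun p hp => by
      have : 0 < p.1 := h₁.trans_lt hp.1.1
      simpa [hQ'', this] using hQ' p this)
    (by
      simp_rw [hr']
      exact (hr.mono hsub).integrableOn_compact isCompact_Icc)
  simp_rw [hr'] at this
  rw [this]
  have h3 : (∫ x in s₁..s₂, Q (x, n)) = ∫ x in s₁..s₂, Q (x, 0) := by
    apply intervalIntegral.integral_congr
    intro x hx
    rw [uIcc_of_le h₂] at hx
    exact hper x (h₁.trans hx.1)
  rw [h3]; simp

noncomputable def phi (x : ℝ) : ℝ := Real.sqrt (1 + x ^ 2)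
noncomputable def dphi (x : ℝ) : ℝ := x / Real.sqrt (1 + x ^ 2)
noncomputable def psi (x : ℝ) : ℝ := 1 / ((1 + x ^ 2) * Real.sqrt (1 + x ^ 2))

lemma phi_deriv (x : ℝ) : HasDerivAt phi (dphi x) x := by
  have h : (1 + x ^ 2) ≠ 0 := by positivity
  have := (((hasDerivAt_id x).pow 2).const_add 1).sqrt (by simpa using h)
  convert! this using 1
  simp [dphi]; field_simp

lemma dphi_deriv (x : ℝ) : HasDerivAt dphi (psi x) x := by
  have h : 0 < (1 + x ^ 2) := by positivity
  have hs : 0 < Real.sqrt (1 + x^2) := Real.sqrt_pos.2 h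
  have := (hasDerivAt_id x).div (phi_deriv x) hs.ne'
  convert! this using 1
  have e : Real.sqrt (1 + x^2) ^ 2 = 1 + x^2 := Real.sq_sqrt h.le
  simp only [psi, dphi, phi, id]
  rw [e]
  field_simp
  rw [e]; ring

lemma contDiff_dphi_aux : ContDiff ℝ (⊤ : ℕ∞) (fun x : ℝ => Real.sqrt (1 + x ^ 2)) := by
  apply ContDiff.sqrt (by fun_prop)
  intro x; positivity

lemma contDiff_psi : ContDiff ℝ (⊤ : ℕ∞) psi := by
  apply ContDiff.div contDiff_const
  · exact (by fun_prop : ContDiff ℝ (⊤ : ℕ∞) (fun x : ℝ => 1 + x ^ 2)).mul contDiff_dphi_aux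
  · intro x; positivity

lemma psi_pos (x : ℝ) : 0 < psi x := by unfold psi; positivity

lemma psi_integrable : Integrable psi := by
  refine integrable_inv_one_add_sq.mono' contDiff_psi.continuous.aestronglyMeasurable ?_
  filter_upwards with x
  rw [Real.norm_of_nonneg (psi_pos x).le, psi, ← one_div]
  have : 1 ≤ Real.sqrt (1 + x ^ 2) := Real.one_le_sqrt.2 (by nlinarith [sq_nonneg x])
  apply one_div_le_one_div_of_le (by positivity)
  nlinarith [sq_nonneg x]

lemma psi_int_pos : 0 < ∫ x, psi x := by
  rw [integral_pos_iff_support_of_nonneg (fun x => (psi_pos x).le) psi_integrable]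
  have : Function.support psi = univ := by
    ext x; simp [(psi_pos x).ne']
  rw [this]; simp

lemma abs_le_phi (x : ℝ) : |x| ≤ phi x := Real.abs_le_sqrt (by linarith)

lemma fourier_vanish (n : ℕ) (hn : 1 ≤ n) (f : ℝ → ℂ) (hf : Continuous f)
    (hp : ∀ t, f (t + n) = f t)
    (h : ∀ k : ℤ, ∫ t in (0:ℝ)..n, Complex.exp (-(((2 * Real.pi * k / n : ℝ) : ℂ) * Complex.I * t)) * f t = 0) :
    ∀ t, f t = 0 := by
  have : Fact (0 < (n : ℝ)) := ⟨by exact_mod_cast hn⟩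
  have hper : Function.Periodic f (n : ℝ) := hp
  let g : C(AddCircle (n:ℝ), ℂ) := ⟨hper.lift, by
    exact continuous_coinduced_dom.2 hf⟩
  have hg : ∀ k, fourierCoeff g k = 0 := by
    intro k
    rw [fourierCoeff_eq_intervalIntegral _ _ 0, zero_add]
    have : (∫ x in (0:ℝ)..n, @fourier (n:ℝ) (-k) x • g x) = 0 := by
      rw [← h k]
      apply intervalIntegral.integral_congr
      intro t _
      simp only [smul_eq_mul]
      rw [fourier_coe_apply]
      congr 2
      push_cast; ring
    rw [this]; simp
  intro t
  have h1 := has_pointwise_sum_fourier_series_of_summable (f := g) (by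
    have : fourierCoeff g = 0 := funext hg
    rw [this]; exact summable_zero) (t : AddCircle (n:ℝ))
  simp only [hg, zero_smul] at h1
  exact h1.unique hasSum_zero


lemma energy_bound (n : ℕ) (a τ : ℝ × ℝ → ℝ) (h : lambdaEnergy n a τ < ⊤) :
    ∫⁻ p in Set.Ici (0:ℝ) ×ˢ Set.Ioc (0:ℝ) (n:ℝ),
      ENNReal.ofReal (psi (a p) *
        (pds HalfPlane a p * pdt HalfPlane τ p - pdt HalfPlane a p * pds HalfPlane τ p)) < ⊤ := by
  set I := ∫ x, psi x with hI
  have hIpos : 0 < I := psi_int_pos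
  have hmem : (fun x => psi x / I) ∈ {ψ : ℝ → ℝ | ContDiff ℝ (⊤ : ℕ∞) ψ ∧ (∀ x, 0 ≤ ψ x) ∧
      ∫ x : ℝ, ψ x = 1} := by
    refine ⟨contDiff_psi.div_const I, fun x => (div_pos (psi_pos x) hIpos).le, ?_⟩
    rw [integral_div, ← hI, div_self hIpos.ne']
  have hle := le_iSup₂ (f := fun (ψ : ℝ → ℝ) (_ : ψ ∈ {ψ : ℝ → ℝ | ContDiff ℝ (⊤ : ℕ∞) ψ ∧
      (∀ x, 0 ≤ ψ x) ∧ ∫ x : ℝ, ψ x = 1}) =>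
      ∫⁻ p in Set.Ici (0:ℝ) ×ˢ Set.Ioc (0:ℝ) (n:ℝ),
      ENNReal.ofReal (ψ (a p) *
        (pds HalfPlane a p * pdt HalfPlane τ p - pdt HalfPlane a p * pds HalfPlane τ p))) _ hmem
  have hlt := lt_of_le_of_lt hle h
  have heq : ∀ p, ENNReal.ofReal (psi (a p) *
        (pds HalfPlane a p * pdt HalfPlane τ p - pdt HalfPlane a p * pds HalfPlane τ p)) =
      ENNReal.ofReal I * ENNReal.ofReal (psi (a p) / I *
        (pds HalfPlane a p * pdt HalfPlane τ p - pdt HalfPlane a p * pds HalfPlane τ p)) := by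
    intro p
    rw [← ENNReal.ofReal_mul hIpos.le]
    congr 1
    field_simp
  simp_rw [heq]
  rw [lintegral_const_mul' _ _ ENNReal.ofReal_ne_top]
  exact ENNReal.mul_lt_top ENNReal.ofReal_lt_top hlt

open scoped Pointwise in
lemma fderivWithin_periodic (f : ℝ × ℝ → ℝ) (n d : ℝ)
    (h : ∀ s t : ℝ, 0 ≤ s → f (s, t + n) = f (s, t) + d) (s t : ℝ) (hs : 0 ≤ s) :
    fderivWithin ℝ f HalfPlane (s, t + n) = fderivWithin ℝ f HalfPlane (s, t) := by
  have h1 := fderivWithin_comp_add_right (𝕜 := ℝ) (f := f) (s := HalfPlane) (x := (s, t))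
    ((0 : ℝ), n)
  have h2 : ((0:ℝ), n) +ᵥ HalfPlane = HalfPlane := by
    ext p
    rw [Set.mem_vadd_set_iff_neg_vadd_mem]
    simp [halfPlane_mem]
  rw [h2] at h1
  have h3 : ((s, t) + ((0:ℝ), n)) = (s, t + n) := by simp
  rw [h3] at h1
  rw [← h1]
  have h4 : fderivWithin ℝ (fun x => f (x + (0, n))) HalfPlane (s, t) =
      fderivWithin ℝ (fun x => f x + d) HalfPlane (s, t) := by
    apply fderivWithin_congr
    · rintro ⟨x, y⟩ hx
      have := h x y (halfPlane_mem.1 hx)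
      simpa using this
    · simpa using h s t hs
  rw [h4, fderivWithin_add_const]

lemma growth (n : ℕ) (a τ : ℝ × ℝ → ℝ)
    (ha : ContDiffOn ℝ (⊤ : ℕ∞) a HalfPlane)
    (hτ : ContDiffOn ℝ (⊤ : ℕ∞) τ HalfPlane)
    (ha_per : ∀ s t : ℝ, 0 ≤ s → a (s, t + n) = a (s, t))
    (hτ_per : ∀ s t : ℝ, 0 ≤ s → τ (s, t + n) = τ (s, t) + n)
    (hCR₁ : ∀ p ∈ HalfPlane, pds HalfPlane a p = pdt HalfPlane τ p)
    (hCR₂ : ∀ p ∈ HalfPlane, pdt HalfPlane a p = -pds HalfPlane τ p)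
    (hE : lambdaEnergy n a τ < ⊤) :
    ∃ A B : ℝ, ∀ s, 0 ≤ s → ∫ t in (0:ℝ)..n, phi (a (s, t)) ≤ A + B * s := by
  have hn0 : (0:ℝ) ≤ n := Nat.cast_nonneg n
  have hEb := energy_bound n a τ hE
  set r : ℝ × ℝ → ℝ := fun p => psi (a p) *
        (pds HalfPlane a p * pdt HalfPlane τ p - pdt HalfPlane a p * pds HalfPlane τ p) with hrdef
  have hcφ : Continuous phi := continuous_iff_continuousAt.2 fun x => (phi_deriv x).continuousAt
  have hcdφ : Continuous dphi := continuous_iff_continuousAt.2 fun x => (dphi_deriv x).continuousAt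
  have ca := ha.continuousOn
  have has : ContinuousOn (pds HalfPlane a) HalfPlane := (contDiffOn_pd ha _).continuousOn
  have hat : ContinuousOn (pdt HalfPlane a) HalfPlane := (contDiffOn_pd ha _).continuousOn
  have hτs : ContinuousOn (pds HalfPlane τ) HalfPlane := (contDiffOn_pd hτ _).continuousOn
  have hτt : ContinuousOn (pdt HalfPlane τ) HalfPlane := (contDiffOn_pd hτ _).continuousOn
  have hr : ContinuousOn r HalfPlane :=
    (contDiff_psi.continuous.comp_continuousOn ca).mul ((has.mul hτt).sub (hat.mul hτs))
  have hr0 : ∀ p ∈ HalfPlane, 0 ≤ r p := by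
    intro p hp
    refine mul_nonneg (psi_pos _).le ?_
    rw [hCR₁ p hp, hCR₂ p hp]
    nlinarith [sq_nonneg (pdt HalfPlane τ p), sq_nonneg (pds HalfPlane τ p)]
  set K := (∫⁻ p in Set.Ici (0:ℝ) ×ˢ Set.Ioc (0:ℝ) (n:ℝ), ENNReal.ofReal (r p)).toReal with hK
  have hsub : ∀ S : ℝ, Icc ((0:ℝ), (0:ℝ)) (S, (n:ℝ)) ⊆ HalfPlane := fun S p hp =>
    halfPlane_mem.2 hp.1.1
  have hrK : ∀ S : ℝ, ∫ x in Icc ((0:ℝ), (0:ℝ)) (S, (n:ℝ)), r x ≤ K := by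
    intro S
    rw [integral_eq_lintegral_of_nonneg_ae]
    · apply ENNReal.toReal_mono hEb.ne
      have hae : (Set.Ici (0:ℝ) ×ˢ Set.Ioc (0:ℝ) (n:ℝ) : Set (ℝ × ℝ)) =ᵐ[volume]
          (Set.Ici (0:ℝ) ×ˢ Set.Icc (0:ℝ) (n:ℝ) : Set (ℝ × ℝ)) :=
        Measure.set_prod_ae_eq (Filter.EventuallyEq.refl _ _) Ioc_ae_eq_Icc
      rw [setLIntegral_congr hae]
      apply lintegral_mono_set
      intro p hp
      exact ⟨hp.1.1, hp.1.2, hp.2.2⟩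
    · exact (ae_restrict_iff' measurableSet_Icc).2 (Filter.Eventually.of_forall fun p hp =>
        hr0 p (hsub S hp))
    · exact (hr.mono (hsub S)).aestronglyMeasurable measurableSet_Icc
  -- Green identity
  set G : ℝ → ℝ := fun s => ∫ t in (0:ℝ)..n, dphi (a (s, t)) * pdt HalfPlane τ (s, t) with hG
  have hGs : ∀ S, 0 ≤ S → ∫ x in Icc ((0:ℝ), (0:ℝ)) (S, (n:ℝ)), r x = G S - G 0 := by
    intro S hS
    refine div_lemma (fun p => dphi (a p) * pdt HalfPlane τ p)
      (fun p => - (dphi (a p) * pds HalfPlane τ p)) r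
      (fun p => dphi (a p) • fderivWithin ℝ (pdt HalfPlane τ) HalfPlane p +
        pdt HalfPlane τ p • (psi (a p) • fderivWithin ℝ a HalfPlane p))
      (fun p => - (dphi (a p) • fderivWithin ℝ (pds HalfPlane τ) HalfPlane p +
        pds HalfPlane τ p • (psi (a p) • fderivWithin ℝ a HalfPlane p)))
      0 S n le_rfl hS hn0
      ((hcdφ.comp_continuousOn ca).mul hτt) ((hcdφ.comp_continuousOn ca).mul hτs).neg hr
      ?_ ?_ ?_ ?_
    · intro p hp
      exact ((dphi_deriv (a p)).comp_hasFDerivAt p (hasFDerivAt_of_contDiffOn ha hp)).mul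
        (hasFDerivAt_of_contDiffOn (contDiffOn_pd hτ _) hp)
    · intro p hp
      exact (((dphi_deriv (a p)).comp_hasFDerivAt p (hasFDerivAt_of_contDiffOn ha hp)).mul
        (hasFDerivAt_of_contDiffOn (contDiffOn_pd hτ _) hp)).neg
    · intro p hp
      have hs := pd_symm hτ hp (1, 0) (0, 1)
      have hs' : fderivWithin ℝ (pds HalfPlane τ) HalfPlane p (0, 1) =
        fderivWithin ℝ (pdt HalfPlane τ) HalfPlane p (1, 0) := hs
      simp only [add_apply, neg_apply,
        smul_apply, smul_eq_mul, hs']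
      simp only [hrdef]
      have e1 : fderivWithin ℝ a HalfPlane p (1, 0) = pds HalfPlane a p := rfl
      have e2 : fderivWithin ℝ a HalfPlane p (0, 1) = pdt HalfPlane a p := rfl
      rw [e1, e2]; ring
    · intro s hs
      have h1 := ha_per s 0 hs
      have h2 := fderivWithin_periodic τ n n hτ_per s 0 hs
      rw [zero_add] at h1 h2
      simp only [pds, h1, h2]
  have hGb : ∀ s, 0 ≤ s → ‖G s‖ ≤ |G 0| + K := by
    intro s hs
    have h1 := hGs s hs
    have h2 := hrK s
    have h3 : 0 ≤ ∫ x in Icc ((0:ℝ), (0:ℝ)) (s, (n:ℝ)), r x :=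
      setIntegral_nonneg measurableSet_Icc fun p hp => hr0 p (hsub s hp)
    rw [Real.norm_eq_abs, abs_le]
    constructor <;> linarith [neg_abs_le (G 0), le_abs_self (G 0), abs_nonneg (G 0)]
  refine ⟨∫ t in (0:ℝ)..n, phi (a (0, t)), |G 0| + K, fun S hS => ?_⟩
  have hq : ContinuousOn (fun p => dphi (a p) * pdt HalfPlane τ p) HalfPlane :=
    (hcdφ.comp_continuousOn ca).mul hτt
  have hF : ∫ x in Icc ((0:ℝ), (0:ℝ)) (S, (n:ℝ)), dphi (a x) * pdt HalfPlane τ x =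
      (∫ t in (0:ℝ)..n, phi (a (S, t))) - ∫ t in (0:ℝ)..n, phi (a (0, t)) := by
    refine div_lemma (fun p => phi (a p)) (fun p => 0) _
      (fun p => dphi (a p) • fderivWithin ℝ a HalfPlane p) (fun p => 0)
      0 S n le_rfl hS hn0 (hcφ.comp_continuousOn ca) continuousOn_const hq ?_ ?_ ?_ ?_
    · intro p hp
      exact (phi_deriv (a p)).comp_hasFDerivAt p (hasFDerivAt_of_contDiffOn ha hp)
    · intro p hp; exact hasFDerivAt_const _ _
    · intro p hp
      have := hCR₁ p (halfPlane_mem.2 hp.le)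
      rw [← this]; simp [pds]
    · intro s hs; rfl
  have hFub : ∫ x in Icc ((0:ℝ), (0:ℝ)) (S, (n:ℝ)), dphi (a x) * pdt HalfPlane τ x =
      ∫ s in (0:ℝ)..S, G s := by
    have hi := (hq.mono (hsub S)).integrableOn_compact isCompact_Icc (μ := volume)
    rw [← Icc_prod_Icc] at hi ⊢
    rw [Measure.volume_eq_prod] at hi ⊢
    rw [setIntegral_prod _ hi, intervalIntegral.integral_of_le hS, integral_Icc_eq_integral_Ioc]
    simp only [hG, intervalIntegral.integral_of_le hn0, integral_Icc_eq_integral_Ioc]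
  have hbd := intervalIntegral.norm_integral_le_of_norm_le_const (a := 0) (b := S) (f := G)
    (C := |G 0| + K) (by
      intro x hx
      rw [uIoc_of_le hS] at hx
      exact hGb x hx.1.le)
  rw [sub_zero, abs_of_nonneg hS] at hbd
  have := le_abs_self (∫ s in (0:ℝ)..S, G s)
  rw [Real.norm_eq_abs] at hbd
  linarith

lemma fourier_const (n : ℕ) (a τ : ℝ × ℝ → ℝ)
    (ha : ContDiffOn ℝ (⊤ : ℕ∞) a HalfPlane)
    (hτ : ContDiffOn ℝ (⊤ : ℕ∞) τ HalfPlane)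
    (ha_per : ∀ s t : ℝ, 0 ≤ s → a (s, t + n) = a (s, t))
    (hτ_per : ∀ s t : ℝ, 0 ≤ s → τ (s, t + n) = τ (s, t))
    (hCR₁ : ∀ p ∈ HalfPlane, pds HalfPlane a p = pdt HalfPlane τ p)
    (hCR₂ : ∀ p ∈ HalfPlane, pdt HalfPlane a p = -pds HalfPlane τ p)
    (ω σ : ℝ) (hσ : σ ^ 2 = 1) (hω : Complex.exp (-((ω : ℂ) * Complex.I * n)) = 1)
    (s : ℝ) (hs : 0 ≤ s) :
    Complex.exp (-(ω * σ * s : ℝ)) * ∫ t in (0:ℝ)..n, Complex.exp (-((ω : ℂ) * Complex.I * t)) *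
      ((a (s, t) : ℂ) + σ * Complex.I * τ (s, t)) =
    ∫ t in (0:ℝ)..n, Complex.exp (-((ω : ℂ) * Complex.I * t)) *
      ((a (0, t) : ℂ) + σ * Complex.I * τ (0, t)) := by
  let L : ℝ × ℝ →L[ℝ] ℂ := (-(ω * σ : ℝ) : ℂ) • Complex.ofRealCLM.comp (ContinuousLinearMap.fst ℝ ℝ ℝ)
    + (-((ω : ℂ) * Complex.I)) • Complex.ofRealCLM.comp (ContinuousLinearMap.snd ℝ ℝ ℝ)
  have hL : ∀ s t : ℝ, L (s, t) = -(ω * σ * s : ℝ) + -((ω : ℂ) * Complex.I * t) := by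
    intro s t; simp [L]
  let W : ℝ × ℝ → ℂ := fun p => (a p : ℂ) + σ * Complex.I * τ p
  let W' : ℝ × ℝ → ℝ × ℝ →L[ℝ] ℂ := fun p =>
    Complex.ofRealCLM.comp (fderivWithin ℝ a HalfPlane p) +
      ((σ : ℂ) * Complex.I) • Complex.ofRealCLM.comp (fderivWithin ℝ τ HalfPlane p)
  have hW : ∀ p : ℝ × ℝ, 0 < p.1 → HasFDerivAt W (W' p) p := fun p hp =>
    (Complex.ofRealCLM.hasFDerivAt.comp p (hasFDerivAt_of_contDiffOn ha hp)).add
      ((Complex.ofRealCLM.hasFDerivAt.comp p (hasFDerivAt_of_contDiffOn hτ hp)).const_mul _)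
  have hWc : ContinuousOn W HalfPlane :=
    (Complex.continuous_ofReal.comp_continuousOn ha.continuousOn).add
      (continuousOn_const.mul (Complex.continuous_ofReal.comp_continuousOn hτ.continuousOn))
  let P : ℝ × ℝ → ℂ := fun p => Complex.exp (L p) * W p
  let P' : ℝ × ℝ → ℝ × ℝ →L[ℝ] ℂ := fun p =>
    Complex.exp (L p) • W' p + W p • (Complex.exp (L p) • L)
  have hP : ∀ p : ℝ × ℝ, 0 < p.1 → HasFDerivAt P (P' p) p := fun p hp =>
    (L.hasFDerivAt.cexp).mul (hW p hp)
  have hPc : ContinuousOn P HalfPlane := (Continuous.continuousOn (by fun_prop)).mul hWc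
  have key := div_lemma P (fun p => (σ * Complex.I) * P p) (fun _ => 0) P'
    (fun p => ((σ : ℂ) * Complex.I) • P' p) 0 s n le_rfl hs (Nat.cast_nonneg n) hPc
    (continuousOn_const.mul hPc) continuousOn_const hP
    (fun p hp => (hP p hp).const_mul _) (by
      intro p hp
      have hp' := halfPlane_mem.2 hp.le
      have e1 : fderivWithin ℝ a HalfPlane p (1, 0) = pdt HalfPlane τ p := hCR₁ p hp'
      have e2 : fderivWithin ℝ a HalfPlane p (0, 1) = - pds HalfPlane τ p := hCR₂ p hp'
      have e3 : fderivWithin ℝ τ HalfPlane p (1, 0) = pds HalfPlane τ p := rfl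
      have e4 : fderivWithin ℝ τ HalfPlane p (0, 1) = pdt HalfPlane τ p := rfl
      have hσ' : (σ : ℂ) ^ 2 = 1 := by exact_mod_cast hσ
      have hL10 : L (1, 0) = -((ω : ℂ) * σ) := by rw [hL]; simp
      have hL01 : L (0, 1) = -((ω : ℂ) * Complex.I) := by rw [hL]; simp
      simp only [P', W', add_apply, smul_apply,
        ContinuousLinearMap.comp_apply, smul_eq_mul, e1, e2, e3, e4, hL10, hL01, Complex.ofRealCLM_apply]
      push_cast
      have hI : Complex.I ^ 2 = -1 := Complex.I_sq
      generalize Complex.exp (L p) = e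
      generalize W p = w
      generalize ((pdt HalfPlane τ p : ℝ) : ℂ) = x
      generalize ((pds HalfPlane τ p : ℝ) : ℂ) = y
      generalize (σ : ℂ) = σ at hσ' ⊢
      linear_combination (e * x * σ ^ 2 - w * e * ω * σ) * hI - e * x * hσ')
    (by
      intro x hx
      have h1 := ha_per x 0 hx
      have h2 := hτ_per x 0 hx
      rw [zero_add] at h1 h2
      simp only [P, W, hL, h1, h2, Complex.exp_add]
      congr 2
      push_cast
      rw [hω]; simp)
  simp only [integral_zero] at key
  have key2 := (sub_eq_zero.1 key.symm)
  simp only [P, W, hL, Complex.exp_add, mul_assoc] at key2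
  rw [intervalIntegral.integral_const_mul, intervalIntegral.integral_const_mul] at key2
  simpa [mul_assoc] using key2

lemma growth_contra (v A B : ℝ) (hv : 0 ≤ v) (h : ∀ s, 0 ≤ s → v * s ^ 2 ≤ A + B * s) : v = 0 := by
  by_contra hne
  have hv' : 0 < v := lt_of_le_of_ne hv (Ne.symm hne)
  set s := (|A| + |B|) / v + 1 with hs
  have hs1 : 1 ≤ s := by
    have : 0 ≤ (|A| + |B|) / v := by positivity
    linarith
  have e : v * s = |A| + |B| + v := by rw [hs]; field_simp
  have h1 := h s (by linarith)
  have h2 : v * s ^ 2 = (|A| + |B| + v) * s := by rw [← e]; ring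
  rw [h2] at h1
  nlinarith [le_abs_self A, le_abs_self B, abs_nonneg A, abs_nonneg B,
    mul_le_mul_of_nonneg_right (le_abs_self B) (by linarith : (0:ℝ) ≤ s),
    mul_le_mul_of_nonneg_left hs1 (abs_nonneg A)]

lemma normal_form_zero (n : ℕ) (hn : 1 ≤ n) (a τ : ℝ × ℝ → ℝ)
    (ha : ContDiffOn ℝ (⊤ : ℕ∞) a HalfPlane)
    (hτ : ContDiffOn ℝ (⊤ : ℕ∞) τ HalfPlane)
    (ha_per : ∀ s t : ℝ, 0 ≤ s → a (s, t + n) = a (s, t))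
    (hτ_per : ∀ s t : ℝ, 0 ≤ s → τ (s, t + n) = τ (s, t))
    (hCR₁ : ∀ p ∈ HalfPlane, pds HalfPlane a p = pdt HalfPlane τ p)
    (hCR₂ : ∀ p ∈ HalfPlane, pdt HalfPlane a p = -pds HalfPlane τ p)
    (ha0 : ∀ t, a (0, t) = 0)
    (A B : ℝ) (hg : ∀ s, 0 ≤ s → ∫ t in (0:ℝ)..n, |a (s, t)| ≤ A + B * s) :
    ∀ p ∈ HalfPlane, a p = 0 := by
  have hn0 : (0:ℝ) < n := by exact_mod_cast hn
  have cslice : ∀ (f : ℝ × ℝ → ℝ), ContDiffOn ℝ (⊤ : ℕ∞) f HalfPlane → ∀ s, 0 ≤ s →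
      Continuous fun t : ℝ => f (s, t) := by
    intro f hf s hs
    exact hf.continuousOn.comp_continuous (by fun_prop) (fun t => halfPlane_mem.2 hs)
  have main : ∀ s, 0 ≤ s → ∀ k : ℤ, ∫ t in (0:ℝ)..n,
      Complex.exp (-(((2 * Real.pi * k / n : ℝ) : ℂ) * Complex.I * t)) * (a (s, t) : ℂ) = 0 := by
    intro s₀ hs₀ k
    set ω : ℝ := 2 * Real.pi * k / n with hωdef
    have hω : Complex.exp (-((ω : ℂ) * Complex.I * n)) = 1 := by
      rw [Complex.exp_eq_one_iff]
      refine ⟨-k, ?_⟩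
      have : (n : ℂ) ≠ 0 := by exact_mod_cast hn0.ne'
      rw [hωdef]; push_cast; field_simp
    set ε : ℝ → ℂ := fun t => Complex.exp (-((ω : ℂ) * Complex.I * t)) with hε
    have hεc : Continuous ε := by fun_prop
    have hεn : ∀ t, ‖ε t‖ = 1 := by
      intro t
      simp [hε, Complex.norm_exp]
    set V : ℂ := ∫ t in (0:ℝ)..n, ε t * (τ (0, t) : ℂ) with hV
    have hii : ∀ (f : ℝ × ℝ → ℝ), ContDiffOn ℝ (⊤ : ℕ∞) f HalfPlane → ∀ s, 0 ≤ s →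
        IntervalIntegrable (fun t => ε t * (f (s, t) : ℂ)) volume 0 n := by
      intro f hf s hs
      exact (hεc.mul (Complex.continuous_ofReal.comp (cslice f hf s hs))).intervalIntegrable _ _
    have split : ∀ σ s : ℝ, 0 ≤ s → ∫ t in (0:ℝ)..n, ε t *
        ((a (s, t) : ℂ) + σ * Complex.I * τ (s, t)) =
        (∫ t in (0:ℝ)..n, ε t * (a (s, t) : ℂ)) +
          σ * Complex.I * ∫ t in (0:ℝ)..n, ε t * (τ (s, t) : ℂ) := by
      intro σ s hs
      rw [← intervalIntegral.integral_const_mul, ← intervalIntegral.integral_add (hii a ha s hs)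
        ((hii τ hτ s hs).const_mul _)]
      congr 1; ext t; ring
    have hu : ∀ s, 0 ≤ s → 2 * ∫ t in (0:ℝ)..n, ε t * (a (s, t) : ℂ) =
        Complex.I * V * ((Real.exp (ω * s) - Real.exp (-(ω * s)) : ℝ) : ℂ) := by
      intro s hs
      have h1 := fourier_const n a τ ha hτ ha_per hτ_per hCR₁ hCR₂ ω 1 (by norm_num) hω s hs
      have h2 := fourier_const n a τ ha hτ ha_per hτ_per hCR₁ hCR₂ ω (-1) (by norm_num) hω s hs
      have s1 := split 1 s hs
      have s2 := split (-1) s hs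
      have s3 := split 1 0 le_rfl
      have s4 := split (-1) 0 le_rfl
      simp only [hε] at s1 s2 s3 s4
      rw [s1, s3] at h1
      rw [s2, s4] at h2
      have z0 : (∫ t in (0:ℝ)..n, Complex.exp (-((ω : ℂ) * Complex.I * t)) * (a (0, t) : ℂ)) = 0 := by
        simp [ha0]
      rw [z0] at h1 h2
      have hV' : (∫ t in (0:ℝ)..n, Complex.exp (-((ω : ℂ) * Complex.I * t)) * (τ (0, t) : ℂ)) = V := rfl
      rw [hV'] at h1 h2
      change 2 * (∫ t in (0:ℝ)..n, Complex.exp (-((ω : ℂ) * Complex.I * t)) * (a (s, t) : ℂ)) = _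
      generalize (∫ t in (0:ℝ)..n, Complex.exp (-((ω : ℂ) * Complex.I * t)) * (a (s, t) : ℂ)) = u at *
      generalize (∫ t in (0:ℝ)..n, Complex.exp (-((ω : ℂ) * Complex.I * t)) * (τ (s, t) : ℂ)) = v at *
      push_cast at h1 h2 ⊢
      have e1 : Complex.exp (-(ω * 1 * s)) * Complex.exp (ω * s) = 1 := by
        rw [← Complex.exp_add]; simp
      have e2 : Complex.exp (-(ω * -1 * s)) * Complex.exp (-(ω * s)) = 1 := by
        rw [← Complex.exp_add]; simp
      linear_combination Complex.exp (ω * s) * h1 + Complex.exp (-(ω * s)) * h2 -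
        (u + Complex.I * v) * e1 - (u - Complex.I * v) * e2
    have hbound : ∀ s, 0 ≤ s → ‖V‖ * |Real.exp (ω * s) - Real.exp (-(ω * s))| ≤
        2 * A + 2 * B * s := by
      intro s hs
      have h1 := congrArg norm (hu s hs)
      rw [norm_mul, norm_mul, norm_mul, Complex.norm_I, Complex.norm_real, Real.norm_eq_abs] at h1
      have h2 : ‖∫ t in (0:ℝ)..n, ε t * (a (s, t) : ℂ)‖ ≤ ∫ t in (0:ℝ)..n, |a (s, t)| := by
        refine (intervalIntegral.norm_integral_le_integral_norm hn0.le).trans (le_of_eq ?_)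
        congr 1; ext t
        rw [norm_mul, hεn, Complex.norm_real, one_mul, Real.norm_eq_abs]
      have h3 := hg s hs
      have h4 : ‖(2:ℂ)‖ = 2 := by simp
      rw [h4, one_mul] at h1
      rw [← h1]; linarith
    have hVω : ‖V‖ * (ω ^ 2 / 2) = 0 := by
      refine growth_contra _ (2 * A) (2 * B) (by positivity) fun s hs => ?_
      refine le_trans ?_ (hbound s hs)
      rw [mul_assoc]
      refine mul_le_mul_of_nonneg_left ?_ (norm_nonneg _)
      have aux : ∀ x : ℝ, 0 ≤ x → x ^ 2 / 2 ≤ Real.exp x - Real.exp (-x) := by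
        intro x hx
        have := Real.quadratic_le_exp_of_nonneg hx
        have h' : Real.exp (-x) ≤ 1 := Real.exp_le_one_iff.2 (by linarith)
        linarith
      rcases le_total 0 (ω * s) with h | h
      · have := aux _ h
        have h' := le_abs_self (Real.exp (ω * s) - Real.exp (-(ω * s)))
        nlinarith
      · have := aux (-(ω * s)) (by linarith)
        rw [neg_neg] at this
        have h' := neg_abs_le (Real.exp (ω * s) - Real.exp (-(ω * s)))
        nlinarith
    have h2 := hu s₀ hs₀
    rcases mul_eq_zero.1 hVω with h | h
    · rw [norm_eq_zero.1 h] at h2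
      simpa using h2
    · have : ω = 0 := by
        have : ω ^ 2 = 0 := by linarith
        exact pow_eq_zero_iff (two_ne_zero) |>.1 this
      rw [show Real.exp (ω * s₀) - Real.exp (-(ω * s₀)) = 0 by rw [this]; simp] at h2
      simpa using h2
  rintro ⟨s, t⟩ hp
  have hs := halfPlane_mem.1 hp
  have := fourier_vanish n hn (fun t => (a (s, t) : ℂ))
    (Complex.continuous_ofReal.comp (cslice a ha s hs))
    (fun t => by rw [ha_per s t hs]) (main s hs) t
  exact_mod_cast this

lemma lambda_eq (n : ℕ) (a τ : ℝ × ℝ → ℝ) (c : ℝ)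
    (ha : ∀ p ∈ HalfPlane, a p = p.1 + c)
    (hJ : ∀ p ∈ HalfPlane,
      pds HalfPlane a p * pdt HalfPlane τ p - pdt HalfPlane a p * pds HalfPlane τ p = 1) :
    lambdaEnergy n a τ = (n : ℝ≥0∞) := by
  have hval : ∀ ψ : ℝ → ℝ, Continuous ψ → (∫⁻ p in Set.Ici (0:ℝ) ×ˢ Set.Ioc (0:ℝ) (n:ℝ),
      ENNReal.ofReal (ψ (a p) *
        (pds HalfPlane a p * pdt HalfPlane τ p - pdt HalfPlane a p * pds HalfPlane τ p))) =
      (∫⁻ s in Set.Ici (0:ℝ), ENNReal.ofReal (ψ (s + c))) * n := by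
    intro ψ hψ
    have hmeas : MeasurableSet (Set.Ici (0:ℝ) ×ˢ Set.Ioc (0:ℝ) (n:ℝ)) :=
      measurableSet_Ici.prod measurableSet_Ioc
    have h1 : (∫⁻ p in Set.Ici (0:ℝ) ×ˢ Set.Ioc (0:ℝ) (n:ℝ),
      ENNReal.ofReal (ψ (a p) *
        (pds HalfPlane a p * pdt HalfPlane τ p - pdt HalfPlane a p * pds HalfPlane τ p))) =
        ∫⁻ p in Set.Ici (0:ℝ) ×ˢ Set.Ioc (0:ℝ) (n:ℝ), ENNReal.ofReal (ψ (p.1 + c)) * 1 := by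
      refine setLIntegral_congr_fun hmeas ?_
      intro p hp
      have hp' : p ∈ HalfPlane := halfPlane_mem.2 hp.1
      simp only [hJ p hp', ha p hp', mul_one]
    rw [h1, Measure.volume_eq_prod, ← Measure.prod_restrict,
      lintegral_prod_mul (f := fun s : ℝ => ENNReal.ofReal (ψ (s + c))) (g := fun _ : ℝ => 1)
        (by fun_prop) (by fun_prop)]
    simp
  unfold lambdaEnergy
  apply le_antisymm
  · refine iSup₂_le fun ψ hψ => ?_
    obtain ⟨h1, h2, h3⟩ := hψ
    rw [hval ψ h1.continuous]
    have hint : Integrable ψ := by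
      by_contra hcon
      rw [integral_undef hcon] at h3
      exact zero_ne_one h3
    have : (∫⁻ s in Set.Ici (0:ℝ), ENNReal.ofReal (ψ (s + c))) ≤ 1 := by
      refine (setLIntegral_le_lintegral _ _).trans ?_
      rw [lintegral_add_right_eq_self (fun x => ENNReal.ofReal (ψ x)) c,
        ← ofReal_integral_eq_lintegral_ofReal hint (Filter.Eventually.of_forall h2), h3]
      simp
    calc _ ≤ 1 * (n : ℝ≥0∞) := by gcongr
      _ = n := one_mul _
  · let b : ContDiffBump (c + 2 : ℝ) := ⟨1/2, 1, by norm_num, by norm_num⟩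
    have hmem : b.normed volume ∈ {ψ : ℝ → ℝ | ContDiff ℝ (⊤ : ℕ∞) ψ ∧ (∀ x, 0 ≤ ψ x) ∧
      ∫ x : ℝ, ψ x = 1} := ⟨b.contDiff_normed, b.nonneg_normed, b.integral_normed⟩
    refine le_trans ?_ (le_iSup₂ (b.normed volume) hmem)
    rw [hval _ b.continuous_normed]
    have : (∫⁻ s in Set.Ici (0:ℝ), ENNReal.ofReal (b.normed volume (s + c))) = 1 := by
      rw [setLIntegral_eq_of_support_subset]
      · rw [lintegral_add_right_eq_self (fun x => ENNReal.ofReal (b.normed volume x)) c,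
          ← ofReal_integral_eq_lintegral_ofReal b.integrable_normed
            (Filter.Eventually.of_forall b.nonneg_normed), b.integral_normed]
        simp
      · intro s hs
        have h1 : b.normed volume (s + c) ≠ 0 := by
          intro h; simp [h] at hs
        have h2 : s + c ∈ Function.support (b.normed volume) := h1
        rw [b.support_normed_eq, Real.ball_eq_Ioo] at h2
        have := h2.1
        simp only [b] at this
        simp only [mem_Ici]
        linarith
    rw [this, one_mul]

lemma pd_fst_add (a : ℝ × ℝ → ℝ) (c : ℝ) (ha : ∀ p ∈ HalfPlane, a p = p.1 + c)
    (p : ℝ × ℝ) (hp : p ∈ HalfPlane) :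
    fderivWithin ℝ a HalfPlane p = ContinuousLinearMap.fst ℝ ℝ ℝ := by
  rw [fderivWithin_congr (f := fun p : ℝ × ℝ => p.1 + c) ha (ha p hp)]
  exact ((ContinuousLinearMap.fst ℝ ℝ ℝ).hasFDerivWithinAt.add_const c).fderivWithin
    (halfPlane_uniqueDiff p hp)

lemma floer_pointwise (X1 zs zt : ℂ) (hx hy : ℝ) (hX : X1 = Complex.I * (hx + hy * Complex.I))
    (h : zs + Complex.I * (zt - X1) = 0) :
    (zs.re * zt.im - zt.re * zs.im) - (zs.re * hx + zs.im * hy) = ‖zs‖ ^ 2 ∧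
    ‖zt - X1‖ ^ 2 = ‖zs‖ ^ 2 := by
  have h1 : zt - X1 = Complex.I * zs := by
    linear_combination (-Complex.I) * h + (zt - X1) * Complex.I_sq
  constructor
  · have h2 : zt = Complex.I * (hx + hy * Complex.I) + Complex.I * zs := by
      rw [← hX, ← h1]; ring
    rw [h2, Complex.sq_norm, Complex.normSq_apply]
    simp; ring
  · rw [h1, norm_mul, Complex.norm_I, one_mul]

lemma omega_eq (H : ℝ → ℂ → ℝ) (hH : IsAdmissible H) (n : ℕ)
    (a τ : ℝ × ℝ → ℝ) (z : ℝ × ℝ → ℂ) (τ₀ : ℝ)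
    (hz_smooth : ContDiffOn ℝ (⊤ : ℕ∞) z HalfPlane)
    (hτ : ∀ p ∈ HalfPlane, τ p = p.2 + τ₀)
    (hτ' : ∀ p ∈ HalfPlane, fderivWithin ℝ τ HalfPlane p = ContinuousLinearMap.snd ℝ ℝ ℝ)
    (hat : ∀ p ∈ HalfPlane, pdt HalfPlane a p = 0)
    (hτd : DifferentiableOn ℝ τ HalfPlane)
    (hdisk_eq : ∀ p ∈ HalfPlane,
      Complex.ofReal (pdt HalfPlane a p) * XH H (τ p) (z p) + pds HalfPlane z p +
        Complex.I * (pdt HalfPlane z p -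
          Complex.ofReal (pdt HalfPlane τ p) * XH H (τ p) (z p)) = 0) :
    omegaEnergy H n τ z = floerEnergy H n τ₀ z := by
  have hmeas : MeasurableSet (Set.Ici (0:ℝ) ×ˢ Set.Ioc (0:ℝ) (n:ℝ)) :=
    measurableSet_Ici.prod measurableSet_Ioc
  unfold omegaEnergy floerEnergy
  rw [← lintegral_const_mul' _ _ (by simp)]
  refine setLIntegral_congr_fun hmeas ?_
  intro p hp0
  have hp : p ∈ HalfPlane := halfPlane_mem.2 hp0.1
  have hu := halfPlane_uniqueDiff p hp
  have hzd : HasFDerivWithinAt z (fderivWithin ℝ z HalfPlane p) HalfPlane p :=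
    (hz_smooth.differentiableOn (by simp) p hp).hasFDerivWithinAt
  have hre : fderivWithin ℝ (fun q => (z q).re) HalfPlane p =
      Complex.reCLM.comp (fderivWithin ℝ z HalfPlane p) :=
    (Complex.reCLM.hasFDerivAt.comp_hasFDerivWithinAt p hzd).fderivWithin hu
  have him : fderivWithin ℝ (fun q => (z q).im) HalfPlane p =
      Complex.imCLM.comp (fderivWithin ℝ z HalfPlane p) :=
    (Complex.imCLM.hasFDerivAt.comp_hasFDerivWithinAt p hzd).fderivWithin hu
  have hτs : pds HalfPlane τ p = 0 := by simp [pds, hτ' p hp]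
  have hτt : pdt HalfPlane τ p = 1 := by simp [pdt, hτ' p hp]
  have hHd : HasFDerivAt (fun q : ℝ × ℂ => H q.1 q.2)
      (fderiv ℝ (fun q : ℝ × ℂ => H q.1 q.2) (τ p, z p)) (τ p, z p) :=
    (hH.smooth.differentiable (by simp) _).hasFDerivAt
  have hHz : fderiv ℝ (H (τ p)) (z p) =
      (fderiv ℝ (fun q : ℝ × ℂ => H q.1 q.2) (τ p, z p)).comp
        (ContinuousLinearMap.inr ℝ ℝ ℂ) :=
    (hHd.comp (z p) (hasFDerivAt_prodMk_right (τ p) (z p))).fderiv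
  have hτw := (hτd p hp).hasFDerivWithinAt
  have hHs : pds HalfPlane (fun q => H (τ q) (z q)) p =
      fderiv ℝ (H (τ p)) (z p) (pds HalfPlane z p) := by
    have := (hHd.comp_hasFDerivWithinAt p (hτw.prodMk hzd)).fderivWithin hu
    have h2 : fderivWithin ℝ (fun q => H (τ q) (z q)) HalfPlane p = _ := this
    rw [pds, h2, hHz]
    simp [pds, hτ' p hp]
  have hlin : fderiv ℝ (H (τ p)) (z p) (pds HalfPlane z p) =
      (pds HalfPlane z p).re * fderiv ℝ (H (τ p)) (z p) 1 +
      (pds HalfPlane z p).im * fderiv ℝ (H (τ p)) (z p) Complex.I := by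
    set w := pds HalfPlane z p
    have : w = w.re • (1 : ℂ) + w.im • Complex.I := by
      simp
    conv_lhs => rw [this]
    rw [map_add, map_smul, map_smul]; simp
  have heq := hdisk_eq p hp
  rw [hat p hp, hτt] at heq
  simp only [Complex.ofReal_zero, zero_mul, zero_add, Complex.ofReal_one, one_mul] at heq
  have hfp := floer_pointwise (XH H (τ p) (z p)) _ _ _ _ rfl heq
  have e1 : pds HalfPlane (fun q => (z q).re) p = (pds HalfPlane z p).re := by
    simp [pds, hre]
  have e2 : pdt HalfPlane (fun q => (z q).re) p = (pdt HalfPlane z p).re := by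
    simp [pdt, hre]
  have e3 : pds HalfPlane (fun q => (z q).im) p = (pds HalfPlane z p).im := by
    simp [pds, him]
  have e4 : pdt HalfPlane (fun q => (z q).im) p = (pdt HalfPlane z p).im := by
    simp [pdt, him]
  simp only []
  rw [e1, e2, e3, e4, hτs, hτt, hHs, hlin, ← hτ p hp, hfp.2]
  have e5 : ‖pds HalfPlane z p‖ ^ 2 + ‖pds HalfPlane z p‖ ^ 2 = 2 * ‖pds HalfPlane z p‖ ^ 2 := by
    ring
  rw [e5, ENNReal.ofReal_mul (by norm_num), ← mul_assoc]
  have e6 : (1 / 2 : ℝ≥0∞) * ENNReal.ofReal 2 = 1 := by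
    rw [ENNReal.ofReal_ofNat, one_div, ENNReal.inv_mul_cancel (by simp) (by simp)]
  rw [e6, one_mul, ← hfp.1]
  ring_nf

end helpers

/-- **For a finite `λ`-energy half cylinder of period `n` one has `E_λ = n`, and
(in the normal form `a = s + a₀`, `τ = t + τ₀`) the `ω`-energy equals the Floer
energy of the disk component.** -/
theorem lambda_energy_eq_and_omega_eq_floer
    (H : ℝ → ℂ → ℝ) (hH : IsAdmissible H) (n : ℕ) (hn : 1 ≤ n)
    (a τ : ℝ × ℝ → ℝ) (z : ℝ × ℝ → ℂ) (c : ℝ)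
    (ha_smooth : ContDiffOn ℝ (⊤ : ℕ∞) a HalfPlane)
    (hτ_smooth : ContDiffOn ℝ (⊤ : ℕ∞) τ HalfPlane)
    (hz_smooth : ContDiffOn ℝ (⊤ : ℕ∞) z HalfPlane)
    (hz_disk : ∀ p ∈ HalfPlane, z p ∈ Disk)
    (ha_per : ∀ s t : ℝ, 0 ≤ s → a (s, t + n) = a (s, t))
    (hτ_per : ∀ s t : ℝ, 0 ≤ s → τ (s, t + n) = τ (s, t) + n)
    (hz_per : ∀ s t : ℝ, 0 ≤ s → z (s, t + n) = z (s, t))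
    (hCR₁ : ∀ p ∈ HalfPlane, pds HalfPlane a p = pdt HalfPlane τ p)
    (hCR₂ : ∀ p ∈ HalfPlane, pdt HalfPlane a p = -pds HalfPlane τ p)
    (hdisk_eq : ∀ p ∈ HalfPlane,
      Complex.ofReal (pdt HalfPlane a p) * XH H (τ p) (z p) + pds HalfPlane z p +
        Complex.I * (pdt HalfPlane z p -
          Complex.ofReal (pdt HalfPlane τ p) * XH H (τ p) (z p)) = 0)
    (hbdry_a : ∀ t : ℝ, a (0, t) = c)
    (hbdry_z : ∀ t : ℝ, ‖z (0, t)‖ = 1)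
    (hElambda : lambdaEnergy n a τ < ⊤) :
    lambdaEnergy n a τ = (n : ℝ≥0∞) ∧
    ∃ a₀ τ₀ : ℝ,
      (∀ p ∈ HalfPlane, a p = p.1 + a₀ ∧ τ p = p.2 + τ₀) ∧
      omegaEnergy H n τ z = floerEnergy H n τ₀ z := by
  have hn0 : (0:ℝ) < n := by exact_mod_cast hn
  obtain ⟨A, B, hAB⟩ := growth n a τ ha_smooth hτ_smooth ha_per hτ_per hCR₁ hCR₂ hElambda
  have had := ha_smooth.differentiableOn (by simp)
  have hτd := hτ_smooth.differentiableOn (by simp)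
  have hfa : ∀ p ∈ HalfPlane, fderivWithin ℝ (fun q : ℝ × ℝ => a q - q.1 - c) HalfPlane p =
      fderivWithin ℝ a HalfPlane p - ContinuousLinearMap.fst ℝ ℝ ℝ := fun p hp =>
    ((((had p hp).hasFDerivWithinAt).sub
      (ContinuousLinearMap.fst ℝ ℝ ℝ).hasFDerivWithinAt).sub_const c).fderivWithin
      (halfPlane_uniqueDiff p hp)
  have hfτ' : ∀ p ∈ HalfPlane, HasFDerivWithinAt (fun q : ℝ × ℝ => τ q - q.2)
      (fderivWithin ℝ τ HalfPlane p - ContinuousLinearMap.snd ℝ ℝ ℝ) HalfPlane p := fun p hp =>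
    (((hτd p hp).hasFDerivWithinAt).sub
      (ContinuousLinearMap.snd ℝ ℝ ℝ).hasFDerivWithinAt)
  have hfτ : ∀ p ∈ HalfPlane, fderivWithin ℝ (fun q : ℝ × ℝ => τ q - q.2) HalfPlane p =
      fderivWithin ℝ τ HalfPlane p - ContinuousLinearMap.snd ℝ ℝ ℝ := fun p hp =>
    (hfτ' p hp).fderivWithin (halfPlane_uniqueDiff p hp)
  have hnf := normal_form_zero n hn (fun q => a q - q.1 - c) (fun q => τ q - q.2)
    ((ha_smooth.sub contDiff_fst.contDiffOn).sub contDiffOn_const)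
    (hτ_smooth.sub contDiff_snd.contDiffOn)
    (fun s t hs => by simp only [ha_per s t hs])
    (fun s t hs => by simp only [hτ_per s t hs]; ring)
    (fun p hp => by
      have := hCR₁ p hp
      simp only [pds, pdt] at this ⊢
      rw [hfa p hp, hfτ p hp]
      simp [this])
    (fun p hp => by
      have := hCR₂ p hp
      simp only [pds, pdt] at this ⊢
      rw [hfa p hp, hfτ p hp]
      simp [this])
    (fun t => by simp [hbdry_a t])
    (A + n * |c|) (B + n) (by
      intro s hs
      have hca : Continuous fun t : ℝ => a (s, t) :=
        ha_smooth.continuousOn.comp_continuous (by fun_prop) (fun t => halfPlane_mem.2 hs)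
      have hcφ : Continuous phi :=
        continuous_iff_continuousAt.2 fun x => (phi_deriv x).continuousAt
      have h1 : ∫ t in (0:ℝ)..n, |a (s, t) - s - c| ≤
          ∫ t in (0:ℝ)..n, (phi (a (s, t)) + (s + |c|)) := by
        apply intervalIntegral.integral_mono_on hn0.le
        · exact ((hca.sub continuous_const).sub continuous_const).abs.intervalIntegrable _ _
        · exact ((hcφ.comp hca).add continuous_const).intervalIntegrable _ _
        · intro t _
          have h1 := abs_sub (a (s, t) - s) c
          have h2 := abs_sub (a (s, t)) s
          have h3 := abs_le_phi (a (s, t))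
          rw [abs_of_nonneg hs] at h2
          linarith
      have hi : IntervalIntegrable (fun t : ℝ => phi (a (s, t))) volume 0 n :=
        (hcφ.comp hca).intervalIntegrable _ _
      rw [intervalIntegral.integral_add hi
        (by simp), intervalIntegral.integral_const] at h1
      have h2 := hAB s hs
      simp only [sub_zero, smul_eq_mul] at h1
      refine h1.trans ?_
      linarith)
  have hA : ∀ p ∈ HalfPlane, a p = p.1 + c := fun p hp => by linarith [hnf p hp]
  have hda := pd_fst_add a c hA
  have has : ∀ p ∈ HalfPlane, pds HalfPlane a p = 1 := fun p hp => by simp [pds, hda p hp]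
  have hat : ∀ p ∈ HalfPlane, pdt HalfPlane a p = 0 := fun p hp => by simp [pdt, hda p hp]
  have hτ' : ∀ p ∈ HalfPlane, fderivWithin ℝ τ HalfPlane p = ContinuousLinearMap.snd ℝ ℝ ℝ := by
    intro p hp
    have h1 : fderivWithin ℝ τ HalfPlane p (1, 0) = 0 := by
      have := hCR₂ p hp
      rw [hat p hp] at this
      simp only [pds] at this
      linarith
    have h2 : fderivWithin ℝ τ HalfPlane p (0, 1) = 1 := by
      have := hCR₁ p hp
      rw [has p hp] at this
      exact this.symm
    ext
    · simpa using h1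
    · simpa using h2
  have hT : ∀ p ∈ HalfPlane, τ p = p.2 + τ (0, 0) := by
    intro p hp
    have := halfPlane_convex.is_const_of_fderivWithin_eq_zero (𝕜 := ℝ)
      (f := fun q : ℝ × ℝ => τ q - q.2)
      (fun q hq => (hfτ' q hq).differentiableWithinAt)
      (fun q hq => by rw [hfτ q hq, hτ' q hq, sub_self]) hp
      (halfPlane_mem.2 le_rfl : ((0:ℝ), (0:ℝ)) ∈ HalfPlane)
    simp only at this
    linarith
  refine ⟨lambda_eq n a τ c hA (fun p hp => ?_), c, τ (0, 0), fun p hp => ⟨hA p hp, hT p hp⟩, ?_⟩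
  · rw [← hCR₁ p hp, has p hp, hat p hp]; ring
  · exact omega_eq H hH n a τ z (τ (0, 0)) hz_smooth hT hτ' hat hτd hdisk_eq
end

section
/- Fix a Hamiltonian H as in the context. For each n ≥ 1 let S_n ≤ 0 and τ_n ∈ ℝ be real numbers and let z_n : [S_n,∞)×ℝ → D be a C^∞ map satisfying: z_n(s,t+n) = z_n(s,t) for all (s,t); the Floer equation ∂_s z_n(s,t) + i·(∂_t z_n(s,t) − X_H(t+τ_n, z_n(s,t))) = 0 for all (s,t); and the boundary condition |z_n(S_n,t)| = 1 for all t. Assume the Floer energies E_n := (1/2)·∫_{S_n}^∞ ∫_0^n |∂_s z_n|² + |∂_t z_n − X_H(t+τ_n, z_n)|² dt ds converge to 0 as n → ∞. Then there is a constant C ∈ (0,∞) such that |∂_s z_n(s,t)| ≤ C and |∂_t z_n(s,t)| ≤ C for all n ≥ 1 and all (s,t) ∈ [S_n,∞)×ℝ. -/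
open Complex Set MeasureTheory ENNReal Filter

/-- The half plane `[S,∞) × ℝ`. -/
def HalfPlaneFrom (S : ℝ) : Set (ℝ × ℝ) := Set.Ici S ×ˢ Set.univ

/-- The Floer energy of `z : [S,∞) × ℝ → D`, periodic of period `n`:
`(1/2) ∫_S^∞ ∫_0^n |∂_s z|² + |∂_t z − X_H(t+τ₀, z)|² dt ds`. -/
noncomputable def floerEnergyFrom (H : ℝ → ℂ → ℝ) (S : ℝ) (n : ℕ) (τ₀ : ℝ)
    (z : ℝ × ℝ → ℂ) : ℝ≥0∞ :=
  (1/2 : ℝ≥0∞) *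
    ∫⁻ p in Set.Ici S ×ˢ Set.Ioc (0:ℝ) (n:ℝ),
      ENNReal.ofReal (‖pds (HalfPlaneFrom S) z p‖ ^ 2 +
        ‖pdt (HalfPlaneFrom S) z p - XH H (p.2 + τ₀) (z p)‖ ^ 2)



theorem realLin_conj (T : ℂ →L[ℝ] ℂ) (c : ℂ) :
    T c + I * T (I * c) = (starRingEnd ℂ) c * (T 1 + I * T I) := by
  have h1 : T c = c.re * T 1 + c.im * T I := by
    have : c = c.re • (1:ℂ) + c.im • I := by
      apply Complex.ext <;> simp
    conv_lhs => rw [this]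
    rw [map_add, map_smul, map_smul]; simp
  have h2 : T (I * c) = c.re * T I - c.im * T 1 := by
    have : I * c = c.re • I + (-c.im) • (1:ℂ) := by
      apply Complex.ext <;> simp
    rw [this, map_add, map_smul, map_smul]; simp; ring
  have h3 : (starRingEnd ℂ) c = c.re - c.im * I := by
    apply Complex.ext <;> simp
  rw [h1, h2, h3]
  linear_combination ((c.im : ℂ) * T I) * I_sq

theorem realLin_decomp (T : ℂ →L[ℝ] ℂ) (c : ℂ) :
    T c = (T 1 - I * T I) / 2 * c + (T 1 + I * T I) / 2 * (starRingEnd ℂ) c := by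
  have h1 : T c = c.re * T 1 + c.im * T I := by
    have : c = c.re • (1:ℂ) + c.im • I := by
      apply Complex.ext <;> simp
    conv_lhs => rw [this]
    rw [map_add, map_smul, map_smul]; simp
  have h3 : (starRingEnd ℂ) c = c.re - c.im * I := by
    apply Complex.ext <;> simp
  have h4 : c = c.re + c.im * I := by simp
  rw [h1, h3]
  conv_rhs => enter [1, 2]; rw [h4]
  linear_combination (c.im : ℂ) * T I * I_sq

theorem int_exp_neg (k : ℂ) (hk : k ≠ 0) (hk2 : Complex.exp (k * (2 * Real.pi)) = 1) :
    ∫ y in (0:ℝ)..(2 * Real.pi), Complex.exp (k * y) = 0 := by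
  rw [integral_exp_mul_complex hk]
  simp [hk2]

theorem exp_per2 : Complex.exp ((-2 * I) * (2 * Real.pi)) = 1 := by
  rw [Complex.exp_eq_one_iff]; exact ⟨-2, by push_cast; ring⟩
theorem exp_per1 : Complex.exp ((-I) * (2 * Real.pi)) = 1 := by
  rw [Complex.exp_eq_one_iff]; exact ⟨-1, by push_cast; ring⟩

/-- Key linear estimate. -/
theorem lin_est (u g : ℂ → ℂ) (u' : ℂ → (ℂ →L[ℝ] ℂ)) (p : ℂ) (r A L : ℝ) (hr : 0 < r)
    (hL : 0 ≤ L)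
    (hd : ∀ x ∈ Metric.closedBall p r, HasFDerivAt u (u' x) x)
    (hg : ∀ x ∈ Metric.closedBall p r, u' x 1 + I * u' x I = g x)
    (hgc : ContinuousOn g (Metric.closedBall p r))
    (hgL : ∀ x ∈ Metric.closedBall p r, ‖g x - g p‖ ≤ L * ‖x - p‖)
    (hu : ∀ x ∈ Metric.closedBall p r, ‖u x‖ ≤ A) :
    ‖(u' p 1 - I * u' p I) / 2‖ ≤ A / r + L * r := by
  set a := (u' p 1 - I * u' p I) / 2 with ha
  set b := (u' p 1 + I * u' p I) / 2 with hb
  have hpi := Real.pi_pos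
  set f : ℂ → ℂ := fun ξ => u (p + Complex.exp ξ) * Complex.exp (-ξ) with hf
  set f' : ℂ → (ℂ →L[ℝ] ℂ) := fun ξ =>
    (u (p + Complex.exp ξ)) • ((-Complex.exp (-ξ)) • (ContinuousLinearMap.id ℝ ℂ)) +
    (Complex.exp (-ξ)) • ((u' (p + Complex.exp ξ)).comp
      (Complex.exp ξ • (ContinuousLinearMap.id ℝ ℂ))) with hf'
  have hmem : ∀ ξ : ℂ, ξ.re ≤ Real.log r → p + Complex.exp ξ ∈ Metric.closedBall p r := by
    intro ξ h
    simp only [Metric.mem_closedBall, dist_eq_norm, add_sub_cancel_left, Complex.norm_exp]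
    rwa [← Real.le_log_iff_exp_le hr]
  have hfd : ∀ ξ : ℂ, ξ.re ≤ Real.log r → HasFDerivAt f (f' ξ) ξ := by
    intro ξ h
    have h1 : HasFDerivAt (fun ξ : ℂ => p + Complex.exp ξ)
        (Complex.exp ξ • (ContinuousLinearMap.id ℝ ℂ)) ξ := by
      have := ((Complex.hasDerivAt_exp ξ).const_add p).hasFDerivAt.restrictScalars ℝ
      refine this.congr_fderiv ?_
      ext x
      simp [mul_comm]
    have h2 : HasFDerivAt (fun ξ : ℂ => Complex.exp (-ξ))
        ((-Complex.exp (-ξ)) • (ContinuousLinearMap.id ℝ ℂ)) ξ := by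
      have := ((hasDerivAt_neg ξ).cexp).hasFDerivAt.restrictScalars ℝ
      refine this.congr_fderiv ?_
      ext x
      simp [mul_comm]
    have h3 := (hd _ (hmem ξ h)).comp ξ h1
    exact h3.mul h2
  have hdbar : ∀ ξ : ℂ, ξ.re ≤ Real.log r → I • f' ξ 1 - f' ξ I =
      I * (Complex.exp (-2 * I * ξ.im) * g (p + Complex.exp ξ)) := by
    intro ξ h
    have h1 := realLin_conj (u' (p + Complex.exp ξ)) (Complex.exp ξ)
    rw [hg _ (hmem ξ h)] at h1
    have h2 : Complex.exp (-ξ) * (starRingEnd ℂ) (Complex.exp ξ) = Complex.exp (-2 * I * ξ.im) := by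
      rw [← Complex.exp_conj, ← Complex.exp_add]
      congr 1
      apply Complex.ext <;> simp; ring
    simp only [hf', add_apply, smul_apply,
      ContinuousLinearMap.comp_apply, ContinuousLinearMap.id_apply, smul_eq_mul, mul_one]
    rw [← h2, mul_comm (Complex.exp ξ) I]
    linear_combination I * Complex.exp (-ξ) * h1 - Complex.exp (-ξ) * u' (p + Complex.exp ξ) (I * Complex.exp ξ) * I_sq
  -- annulus estimate
  have hann : ∀ x0 : ℝ, x0 ≤ Real.log r →
      ‖∫ y in (0:ℝ)..(2 * Real.pi), f (x0 + y * I)‖ ≤ 2 * Real.pi * (A / r + L * r) := by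
    intro x0 hx0
    set x1 := Real.log r with hx1
    have hgcont : ContinuousOn (fun ξ : ℂ => g (p + Complex.exp ξ)) {ξ : ℂ | ξ.re ≤ x1} := by
      refine hgc.comp (by fun_prop) (fun ξ h => hmem ξ h)
    have hsub : ∀ ξ ∈ (uIcc x0 x1 ×ℂ uIcc (0:ℝ) (2 * Real.pi)), ξ.re ≤ x1 := by
      intro ξ h
      have := h.1
      simp only [mem_preimage] at this
      rw [uIcc_of_le hx0] at this
      exact this.2
    have key := Complex.integral_boundary_rect_of_hasFDerivAt_real_off_countable f f'
      (x0 : ℂ) (x1 + (2 * Real.pi : ℝ) * I) ∅ countable_empty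
      (by
        simp only [ofReal_re, add_re, mul_re, I_re, I_im, ofReal_im, add_im, mul_im]
        norm_num
        intro ξ h
        exact (hfd ξ (hsub ξ h)).continuousAt.continuousWithinAt)
      (by
        intro ξ h
        apply hfd
        have := h.1.1
        simp at this
        rcases this.2 with h | h <;> linarith)
      (by
        simp only [ofReal_re, add_re, mul_re, I_re, I_im, ofReal_im, add_im, mul_im]
        norm_num
        have : ContinuousOn (fun ξ : ℂ => I * (Complex.exp (-2 * I * ξ.im) * g (p + Complex.exp ξ)))
          (uIcc x0 x1 ×ℂ uIcc (0:ℝ) (2 * Real.pi)) := by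
          refine continuousOn_const.mul (ContinuousOn.mul (by fun_prop) (hgcont.mono hsub))
        refine (this.congr ?_).integrableOn_compact (IsCompact.reProdIm isCompact_uIcc isCompact_uIcc)
        intro ξ h
        simpa using hdbar ξ (hsub ξ h))
    have e1 : (x0 : ℂ).re = x0 := by simp
    have e2 : (x0 : ℂ).im = 0 := by simp
    have e3 : ((x1:ℂ) + (2 * Real.pi : ℝ) * I).re = x1 := by simp
    have e4 : ((x1:ℂ) + (2 * Real.pi : ℝ) * I).im = 2 * Real.pi := by simp
    rw [e1, e2, e3, e4] at key
    have htb : (∫ x in x0..x1, f (x + ((0:ℝ):ℂ) * I)) = ∫ x in x0..x1, f (x + ((2 * Real.pi : ℝ):ℂ) * I) := by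
      congr 1
      ext x
      simp only [hf]
      have h1 : Complex.exp (x + ((2 * Real.pi : ℝ):ℂ) * I) = Complex.exp (x + ((0:ℝ):ℂ) * I) := by
        rw [Complex.exp_eq_exp_iff_exists_int]; exact ⟨1, by push_cast; ring⟩
      have h2 : Complex.exp (-(x + ((2 * Real.pi : ℝ):ℂ) * I)) = Complex.exp (-(x + ((0:ℝ):ℂ) * I)) := by
        rw [Complex.exp_eq_exp_iff_exists_int]; exact ⟨-1, by push_cast; ring⟩
      rw [h1, h2]
    rw [htb, sub_self, zero_add] at key
    have hrhs : ‖∫ x in x0..x1, ∫ y in (0:ℝ)..(2 * Real.pi), (I • f' (x + y * I) 1 - f' (x + y * I) I)‖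
        ≤ 2 * Real.pi * (L * r) := by
      have hin : ∀ x ∈ uIoc x0 x1, ‖∫ y in (0:ℝ)..(2 * Real.pi), (I • f' (x + y * I) 1 - f' (x + y * I) I)‖
          ≤ 2 * Real.pi * L * Real.exp x := by
        intro x hx
        rw [uIoc_of_le hx0] at hx
        have hx' : ∀ y : ℝ, ((x:ℂ) + y * I).re ≤ x1 := fun y => by simpa using hx.2
        have : ∫ y in (0:ℝ)..(2 * Real.pi), (I • f' (x + y * I) 1 - f' (x + y * I) I) =
            ∫ y in (0:ℝ)..(2 * Real.pi), I * (Complex.exp (-2 * I * y) * (g (p + Complex.exp (x + y * I)) - g p)) := by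
          have h0 : ∫ y in (0:ℝ)..(2 * Real.pi), I * (Complex.exp (-2 * I * y) * g p) = 0 := by
            rw [intervalIntegral.integral_const_mul, intervalIntegral.integral_mul_const,
              int_exp_neg (-2 * I) (by simp) exp_per2]; simp
          have hc1 : Continuous (fun y : ℝ => g (p + Complex.exp (x + y * I))) := by
            have : Continuous ((fun ξ : ℂ => g (p + Complex.exp ξ)) ∘ (fun y : ℝ => (x:ℂ) + y * I)) :=
              hgcont.comp_continuous (by fun_prop) (fun y => hx' y)
            exact this
          rw [← sub_zero (∫ y in (0:ℝ)..(2 * Real.pi), (I • f' (x + y * I) 1 - f' (x + y * I) I)), ← h0]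
          have : ∀ y : ℝ, (I • f' (x + y * I) 1 - f' (x + y * I) I) =
              I * (Complex.exp (-2 * I * y) * g (p + Complex.exp (x + y * I))) := by
            intro y
            rw [hdbar _ (hx' y)]; simp
          simp_rw [this]
          rw [← intervalIntegral.integral_sub]
          · congr 1; ext y; ring
          · exact Continuous.intervalIntegrable
              (continuous_const.mul (Continuous.mul (by fun_prop) hc1)) _ _
          · exact Continuous.intervalIntegrable (by fun_prop) _ _
        rw [this]
        have := intervalIntegral.norm_integral_le_of_norm_le_const (a := 0) (b := 2 * Real.pi)
          (C := L * Real.exp x) (f := fun y : ℝ => I * (Complex.exp (-2 * I * y) * (g (p + Complex.exp (x + y * I)) - g p)))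
          (by
            intro y _
            rw [norm_mul, norm_mul, norm_I, one_mul, Complex.norm_exp]
            have := hgL _ (hmem _ (hx' y))
            simp only [add_sub_cancel_left, Complex.norm_exp] at this
            simpa using this)
        refine this.trans (le_of_eq ?_)
        rw [sub_zero, abs_of_pos (by positivity)]; ring
      refine (intervalIntegral.norm_integral_le_of_norm_le hx0 (g := fun x => 2 * Real.pi * L * Real.exp x)
        (by
          refine Eventually.of_forall fun x hx => hin x ?_
          rwa [uIoc_of_le hx0]) (Continuous.intervalIntegrable (by fun_prop) _ _)).trans ?_
      rw [intervalIntegral.integral_const_mul, integral_exp, hx1, Real.exp_log hr]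
      have : 0 ≤ 2 * Real.pi * L * Real.exp x0 := by positivity
      nlinarith
    have h1 : ‖∫ y in (0:ℝ)..(2 * Real.pi), f (x1 + y * I)‖ ≤ 2 * Real.pi * (A / r) := by
      refine (intervalIntegral.norm_integral_le_of_norm_le_const (C := A / r) ?_).trans (le_of_eq ?_)
      · intro y _
        simp only [hf, norm_mul, Complex.norm_exp]
        have hre : ((x1:ℂ) + y * I).re = Real.log r := by simp [hx1]
        rw [neg_re, hre, Real.exp_neg, Real.exp_log hr, div_eq_mul_inv]
        gcongr
        exact hu _ (hmem _ hre.le)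
      · rw [sub_zero, abs_of_pos (by positivity)]; ring
    have h2 : I * ∫ y in (0:ℝ)..(2 * Real.pi), f (x0 + y * I) = (I * ∫ y in (0:ℝ)..(2 * Real.pi), f (x1 + y * I))
      - ∫ x in x0..x1, ∫ y in (0:ℝ)..(2 * Real.pi), (I • f' (x + y * I) 1 - f' (x + y * I) I) := by
      rw [← key]; simp only [smul_eq_mul]; ring
    have h3 := congrArg norm h2
    rw [norm_mul, norm_I, one_mul] at h3
    rw [h3]
    refine (norm_sub_le _ _).trans ?_
    rw [norm_mul, norm_I, one_mul]
    linarith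
  -- limit
  refine le_of_forall_pos_le_add fun ε hε => ?_
  have hdp := hd p (Metric.mem_closedBall_self hr.le)
  rw [hasFDerivAt_iff_isLittleO_nhds_zero] at hdp
  have hev := hdp.def hε
  rw [Metric.eventually_nhds_iff] at hev
  obtain ⟨δ, hδ, hev⟩ := hev
  set ρ := min r (δ / 2) with hρ
  have hρ0 : 0 < ρ := by positivity
  have hx0 : Real.log ρ ≤ Real.log r := Real.log_le_log hρ0 (min_le_left _ _)
  have hA := hann (Real.log ρ) hx0
  have hfc : Continuous fun y : ℝ => f ((Real.log ρ : ℝ) + y * I) := by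
    rw [continuous_iff_continuousAt]
    intro y
    have h1 : ContinuousAt f ((Real.log ρ : ℝ) + y * I) := (hfd _ (by simpa using hx0)).continuousAt
    exact ContinuousAt.comp (f := fun y : ℝ => ((Real.log ρ : ℝ) : ℂ) + y * I) h1 (by fun_prop)
  have hrep : ∀ y : ℝ, f ((Real.log ρ : ℝ) + y * I) =
      (f ((Real.log ρ : ℝ) + y * I) - (u p * (ρ:ℂ)⁻¹ * Complex.exp (-I * y) + a + b * Complex.exp (-2 * I * y)))
       + (u p * (ρ:ℂ)⁻¹ * Complex.exp (-I * y) + a + b * Complex.exp (-2 * I * y)) := fun y => by ring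
  have hintg : ∫ y in (0:ℝ)..(2 * Real.pi), (u p * (ρ:ℂ)⁻¹ * Complex.exp (-I * y) + a + b * Complex.exp (-2 * I * y))
      = 2 * Real.pi * a := by
    rw [intervalIntegral.integral_add, intervalIntegral.integral_add,
      intervalIntegral.integral_const_mul, intervalIntegral.integral_const_mul,
      int_exp_neg (-2 * I) (by simp) exp_per2, int_exp_neg (-I) (by simp) exp_per1]
    · simp
    all_goals exact Continuous.intervalIntegrable (by fun_prop) _ _
  have hdiff : ‖∫ y in (0:ℝ)..(2 * Real.pi), (f ((Real.log ρ : ℝ) + y * I) - (u p * (ρ:ℂ)⁻¹ * Complex.exp (-I * y) + a + b * Complex.exp (-2 * I * y)))‖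
      ≤ 2 * Real.pi * ε := by
    refine (intervalIntegral.norm_integral_le_of_norm_le_const (C := ε) ?_).trans (le_of_eq ?_)
    · intro y _
      set ξ : ℂ := (Real.log ρ : ℝ) + y * I with hξ
      have hexp : Complex.exp ξ = ρ * Complex.exp (I * y) := by
        rw [hξ, Complex.exp_add, ← Complex.ofReal_exp, Real.exp_log hρ0, mul_comm I]
      have hnorm : ‖Complex.exp ξ‖ = ρ := by
        rw [Complex.norm_exp]; simp [hξ, Real.exp_log hρ0]
      have h1 := hev (y := Complex.exp ξ) (by
        rw [dist_zero_right, hnorm]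
        have := min_le_right r (δ/2); linarith)
      rw [realLin_decomp (u' p) (Complex.exp ξ), hnorm] at h1
      have hexpn : Complex.exp (-ξ) = (ρ:ℂ)⁻¹ * Complex.exp (-I * y) := by
        rw [Complex.exp_neg, hexp, mul_inv, ← Complex.exp_neg]; ring_nf
      have hρc : (ρ:ℂ) ≠ 0 := by exact_mod_cast hρ0.ne'
      have hone : Complex.exp ξ * Complex.exp (-ξ) = 1 := by rw [← Complex.exp_add]; simp
      have htwo : (starRingEnd ℂ) (Complex.exp ξ) * Complex.exp (-ξ) = Complex.exp (-2 * I * y) := by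
        rw [← Complex.exp_conj, ← Complex.exp_add]
        congr 1
        rw [hξ]
        apply Complex.ext <;> simp; ring
      have : f ξ - (u p * (ρ:ℂ)⁻¹ * Complex.exp (-I * y) + a + b * Complex.exp (-2 * I * y)) =
          (u (p + Complex.exp ξ) - u p - (a * Complex.exp ξ + b * (starRingEnd ℂ) (Complex.exp ξ))) * Complex.exp (-ξ) := by
        simp only [hf]
        rw [mul_assoc, ← hexpn]
        linear_combination a * hone + b * htwo
      rw [this, norm_mul]
      have hn2 : ‖Complex.exp (-ξ)‖ = ρ⁻¹ := by rw [Complex.exp_neg, norm_inv, hnorm]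
      rw [hn2]
      calc _ ≤ (ε * ρ) * ρ⁻¹ := by gcongr
        _ = ε := by field_simp
    · rw [sub_zero, abs_of_pos (by positivity)]; ring
  have hsum : ∫ y in (0:ℝ)..(2 * Real.pi), f ((Real.log ρ : ℝ) + y * I) =
    (∫ y in (0:ℝ)..(2 * Real.pi), (f ((Real.log ρ : ℝ) + y * I) - (u p * (ρ:ℂ)⁻¹ * Complex.exp (-I * y) + a + b * Complex.exp (-2 * I * y)))) + 2 * Real.pi * a := by
    rw [← hintg, ← intervalIntegral.integral_add]
    · congr 1; ext y; ring
    · exact Continuous.intervalIntegrable (hfc.sub (by fun_prop)) _ _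
    · exact Continuous.intervalIntegrable (by fun_prop) _ _
  have hfin : ‖2 * Real.pi * a‖ ≤ 2 * Real.pi * (A / r + L * r) + 2 * Real.pi * ε := by
    have : (2 * Real.pi * a : ℂ) = (∫ y in (0:ℝ)..(2 * Real.pi), f ((Real.log ρ : ℝ) + y * I)) -
      (∫ y in (0:ℝ)..(2 * Real.pi), (f ((Real.log ρ : ℝ) + y * I) - (u p * (ρ:ℂ)⁻¹ * Complex.exp (-I * y) + a + b * Complex.exp (-2 * I * y)))) := by
      rw [hsum]; ring
    rw [this]
    exact (norm_sub_le _ _).trans (add_le_add hA hdiff)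
  have hn : ‖(2 * Real.pi * a : ℂ)‖ = 2 * Real.pi * ‖a‖ := by
    rw [norm_mul, norm_mul]; simp [abs_of_pos hpi]
  rw [hn] at hfin
  have : 2 * Real.pi * ‖a‖ ≤ 2 * Real.pi * (A / r + L * r + ε) := by linarith
  exact le_of_mul_le_mul_left this (by positivity)

theorem lin_est' (u g : ℂ → ℂ) (u' : ℂ → (ℂ →L[ℝ] ℂ)) (p : ℂ) (r A L K : ℝ) (hr : 0 < r)
    (hL : 0 ≤ L) 
    (hd : ∀ x ∈ Metric.closedBall p r, HasFDerivAt u (u' x) x)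
    (hg : ∀ x ∈ Metric.closedBall p r, u' x 1 + I * u' x I = g x)
    (hgc : ContinuousOn g (Metric.closedBall p r))
    (hgL : ∀ x ∈ Metric.closedBall p r, ‖g x - g p‖ ≤ L * ‖x - p‖)
    (hu : ∀ x ∈ Metric.closedBall p r, ‖u x‖ ≤ A) (hK : ‖g p‖ ≤ K) :
    ‖u' p‖ ≤ A / r + L * r + K := by
  have h := lin_est u g u' p r A L hr hL hd hg hgc hgL hu
  have hp := hg p (Metric.mem_closedBall_self hr.le)
  refine ContinuousLinearMap.opNorm_le_bound _ ((norm_nonneg _).trans (h.trans (by linarith [norm_nonneg (g p)]))) fun c => ?_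
  rw [realLin_decomp (u' p) c, hp]
  refine (norm_add_le _ _).trans ?_
  rw [norm_mul, norm_mul _ ((starRingEnd ℂ) c), RCLike.norm_conj, ← add_mul]
  gcongr
  rw [norm_div]
  have : ‖(2:ℂ)‖ = 2 := by simp
  rw [this]
  linarith [norm_nonneg (g p)]

theorem realLin_ext {T T' : ℂ →L[ℝ] ℂ} (h1 : T 1 = T' 1) (hI : T I = T' I) : T = T' := by
  ext1 c
  rw [realLin_decomp T c, realLin_decomp T' c, h1, hI]

/-- Interior estimate. -/
theorem int_est (K Λ : ℝ) (hK : 0 ≤ K) (hΛ : 0 ≤ Λ) (u g : ℂ → ℂ) (u' : ℂ → (ℂ →L[ℝ] ℂ))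
    (p : ℂ) (R : ℝ) (hR : 0 < R) (hR1 : R ≤ 1)
    (hd : ∀ x ∈ Metric.closedBall p R, HasFDerivAt u (u' x) x)
    (hc : ContinuousOn u' (Metric.closedBall p R))
    (hg : ∀ x ∈ Metric.closedBall p R, u' x 1 + I * u' x I = g x)
    (hu : ∀ x ∈ Metric.closedBall p R, ‖u x‖ ≤ 1)
    (hgK : ∀ x ∈ Metric.closedBall p R, ‖g x‖ ≤ K)
    (hgL : ∀ x ∈ Metric.closedBall p R, ∀ y ∈ Metric.closedBall p R,
      ‖g x - g y‖ ≤ Λ * (‖x - y‖ + ‖u x - u y‖)) :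
    ‖u' p‖ ≤ (10 + 8 * Λ + 2 * K) / R := by
  have hcφ : ContinuousOn (fun x => (R - ‖x - p‖) * ‖u' x‖) (Metric.closedBall p R) := by
    refine ContinuousOn.mul (by fun_prop) hc.norm
  obtain ⟨x0, hx0, hmax⟩ := (isCompact_closedBall p R).exists_isMaxOn
    ⟨p, Metric.mem_closedBall_self hR.le⟩ hcφ
  set M := (R - ‖x0 - p‖) * ‖u' x0‖ with hM
  have hmax' : ∀ x ∈ Metric.closedBall p R, (R - ‖x - p‖) * ‖u' x‖ ≤ M := fun x hx => hmax hx
  set d := R - ‖x0 - p‖ with hdd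
  have hx0' : ‖x0 - p‖ ≤ R := by simpa [dist_eq_norm] using hx0
  have hd0 : 0 ≤ d := by linarith
  have hd1 : d ≤ 1 := by linarith [norm_nonneg (x0 - p)]
  have hpM : R * ‖u' p‖ ≤ M := by simpa using hmax' p (Metric.mem_closedBall_self hR.le)
  have hM0 : 0 ≤ M := by positivity
  suffices hMb : M ≤ 10 + 8 * Λ + 2 * K by
    rw [le_div_iff₀ hR]; linarith
  rcases hd0.eq_or_lt with h0 | hdpos
  · have : M = 0 := by rw [hM, ← h0]; simp
    rw [this]; positivity
  set θ := 1 / (2 + 4 * Λ) with hθ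
  have hθ0 : 0 < θ := by positivity
  have hθ1 : θ * (2 + 4 * Λ) = 1 := by rw [hθ]; field_simp
  have hθ2 : θ ≤ 1 / 2 := by nlinarith
  have hΛθ : 2 * Λ * θ ≤ 1 / 2 := by nlinarith
  set r := θ * d with hr
  have hr0 : 0 < r := by positivity
  have hrd : r ≤ d / 2 := by nlinarith
  have hsub : Metric.closedBall x0 r ⊆ Metric.closedBall p R := by
    apply Metric.closedBall_subset_closedBall'
    rw [dist_eq_norm]; linarith
  have hder : ∀ y ∈ Metric.closedBall x0 r, ‖u' y‖ ≤ 2 * M / d := by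
    intro y hy
    have h1 := hmax' y (hsub hy)
    have h2 : ‖y - p‖ ≤ ‖y - x0‖ + ‖x0 - p‖ := by
      have : y - p = (y - x0) + (x0 - p) := by ring
      rw [this]; exact norm_add_le _ _
    have h3 : ‖y - x0‖ ≤ r := by simpa [dist_eq_norm] using hy
    have h4 : d / 2 ≤ R - ‖y - p‖ := by linarith
    rw [le_div_iff₀ hdpos]
    have := mul_le_mul_of_nonneg_right h4 (norm_nonneg (u' y))
    linarith
  have hlip : ∀ y ∈ Metric.closedBall x0 r, ‖u y - u x0‖ ≤ 2 * M / d * ‖y - x0‖ := by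
    intro y hy
    exact (convex_closedBall x0 r).norm_image_sub_le_of_norm_hasFDerivWithin_le
      (fun x hx => (hd x (hsub hx)).hasFDerivWithinAt) hder (Metric.mem_closedBall_self hr0.le) hy
  have hgc : ContinuousOn g (Metric.closedBall x0 r) := by
    have : ContinuousOn (fun x => u' x 1 + I * u' x I) (Metric.closedBall x0 r) := by
      have := hc.mono hsub
      fun_prop
    exact this.congr fun x hx => (hg x (hsub hx)).symm
  have hfin := lin_est' u g u' x0 r 1 (Λ * (1 + 2 * M / d)) K hr0 (by positivity)
    (fun x hx => hd x (hsub hx)) (fun x hx => hg x (hsub hx)) hgc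
    (fun x hx => by
      refine (hgL x (hsub hx) x0 hx0).trans ?_
      rw [mul_assoc]
      gcongr
      linarith [hlip x hx])
    (fun x hx => hu x (hsub hx)) (hgK x0 hx0)
  have h5 : M ≤ d * (1 / r + Λ * (1 + 2 * M / d) * r + K) := by
    rw [hM]; gcongr
  have h6 : d * (1 / r + Λ * (1 + 2 * M / d) * r + K) = (2 + 4 * Λ) + Λ * θ * d * d + 2 * Λ * θ * M * d + K * d := by
    rw [hr]
    have : 1 / (θ * d) = (2 + 4 * Λ) / d := by rw [hθ]; field_simp
    rw [this]
    field_simp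
    ring
  have h7 : Λ * θ * d * d ≤ 1 := by
    have : Λ * θ ≤ 1 := by linarith [mul_nonneg hΛ hθ0.le]
    have : Λ * θ * d ≤ 1 := mul_le_one₀ this hd0 hd1
    exact mul_le_one₀ this hd0 hd1
  have h8 : 2 * Λ * θ * M * d ≤ M / 2 := by
    have : 2 * Λ * θ * M ≤ 1 / 2 * M := by gcongr
    have h9 : 2 * Λ * θ * M * d ≤ 2 * Λ * θ * M * 1 := by gcongr
    linarith
  have h9 : K * d ≤ K := mul_le_of_le_one_right hK hd1
  linarith

structure GoodG (K Λ : ℝ) (G : ℝ → ℂ → ℂ) : Prop where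
  K0 : 0 ≤ K
  L0 : 0 ≤ Λ
  bound : ∀ t w, ‖w‖ ≤ 1 → ‖G t w‖ ≤ K
  lip : ∀ t t' w w', ‖w‖ ≤ 1 → ‖w'‖ ≤ 1 → ‖G t w - G t' w'‖ ≤ Λ * (|t - t'| + ‖w - w'‖)
  tang : ∀ t w, ‖w‖ = 1 → (starRingEnd ℂ) (G t w) * w ^ 2 = G t w

structure HSol (G : ℝ → ℂ → ℂ) (U : ℂ → ℂ) (U' : ℂ → (ℂ →L[ℝ] ℂ)) : Prop where
  der : ∀ x : ℂ, 0 ≤ x.re → HasFDerivWithinAt U (U' x) {x : ℂ | 0 ≤ x.re} x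
  cont : ContinuousOn U' {x : ℂ | 0 ≤ x.re}
  bd : ∀ x : ℂ, 0 ≤ x.re → ‖U x‖ ≤ 1
  eqn : ∀ x : ℂ, 0 ≤ x.re → U' x 1 + I * U' x I = G x.im (U x)
  bdry : ∀ x : ℂ, x.re = 0 → ‖U x‖ = 1

theorem HSol.derAt {G : ℝ → ℂ → ℂ} {U : ℂ → ℂ} {U' : ℂ → (ℂ →L[ℝ] ℂ)} (h : HSol G U U')
    (x : ℂ) (hx : 0 < x.re) : HasFDerivAt U (U' x) x := by
  refine (h.der x hx.le).hasFDerivAt ?_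
  have : IsOpen {x : ℂ | 0 < x.re} := isOpen_lt continuous_const Complex.continuous_re
  exact Filter.mem_of_superset (this.mem_nhds hx) (fun y hy => by
    simp only [mem_ofPred_eq] at *; exact le_of_lt hy)

theorem HSol.glip {K Λ : ℝ} {G : ℝ → ℂ → ℂ} (hG : GoodG K Λ G) {U : ℂ → ℂ} {U' : ℂ → (ℂ →L[ℝ] ℂ)}
    (h : HSol G U U') (x y : ℂ) (hx : 0 ≤ x.re) (hy : 0 ≤ y.re) :
    ‖G x.im (U x) - G y.im (U y)‖ ≤ Λ * (‖x - y‖ + ‖U x - U y‖) := by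
  refine (hG.lip _ _ _ _ (h.bd x hx) (h.bd y hy)).trans ?_
  have := hG.L0
  gcongr
  rw [← Complex.sub_im]; exact Complex.abs_im_le_norm _

theorem HSol.interior {K Λ : ℝ} {G : ℝ → ℂ → ℂ} (hG : GoodG K Λ G) {U : ℂ → ℂ}
    {U' : ℂ → (ℂ →L[ℝ] ℂ)} (h : HSol G U U') (x : ℂ) (R : ℝ) (hR : 0 < R) (hR1 : R ≤ 1)
    (hx : R < x.re) : ‖U' x‖ ≤ (10 + 8 * Λ + 2 * K) / R := by
  have hpos : ∀ y ∈ Metric.closedBall x R, 0 < y.re := by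
    intro y hy
    have h1 : ‖y - x‖ ≤ R := by simpa [dist_eq_norm] using hy
    have h2 := (Complex.abs_re_le_norm (y - x)).trans h1
    rw [abs_le, Complex.sub_re] at h2
    linarith
  exact int_est K Λ hG.K0 hG.L0 U (fun x => G x.im (U x)) U' x R hR hR1
    (fun y hy => h.derAt y (hpos y hy))
    (h.cont.mono fun y hy => (hpos y hy).le)
    (fun y hy => h.eqn y (hpos y hy).le) (fun y hy => h.bd y (hpos y hy).le)
    (fun y hy => hG.bound _ _ (h.bd y (hpos y hy).le))
    (fun y hy w hw => h.glip hG y w (hpos y hy).le (hpos w hw).le)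

theorem HSol.vert {K Λ : ℝ} {G : ℝ → ℂ → ℂ} (hG : GoodG K Λ G) {U : ℂ → ℂ}
    {U' : ℂ → (ℂ →L[ℝ] ℂ)} (h : HSol G U U') (d t y : ℝ) (hd : 0 < d) (hd1 : d ≤ 1)
    (hU : ‖U (d + t * I)‖ < 1 / 2)
    (hy : |y - t| ≤ 1 / (8 * (10 + 8 * Λ + 2 * K)) * d) : ‖U (d + y * I)‖ ≤ 3 / 4 := by
  have hK := hG.K0
  have hΛ := hG.L0
  set C := 10 + 8 * Λ + 2 * K with hC
  have hC0 : 0 < C := by positivity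
  have hconv : Convex ℝ {x : ℂ | x.re = d} := by
    intro a ha b hb s t hs ht hst
    simp only [mem_ofPred_eq] at *
    simp [ha, hb, ← add_mul, hst]
  have h1 := hconv.norm_image_sub_le_of_norm_hasFDerivWithin_le (f := U) (f' := U') (C := 2 * C / d)
    (x := d + t * I) (y := d + y * I)
    (fun x hx => by
      simp only [mem_ofPred_eq] at hx
      exact (h.derAt x (by rw [hx]; exact hd)).hasFDerivWithinAt)
    (fun x hx => by
      simp only [mem_ofPred_eq] at hx
      have := h.interior hG x (d / 2) (by linarith) (by linarith) (by linarith)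
      refine this.trans (le_of_eq ?_)
      rw [← hC]
      field_simp)
    (by simp) (by simp)
  have h2 : ‖(d + y * I : ℂ) - (d + t * I)‖ = |y - t| := by
    have : (d + y * I : ℂ) - (d + t * I) = ((y - t : ℝ) : ℂ) * I := by push_cast; ring
    rw [this, norm_mul, norm_I, mul_one, Complex.norm_real, Real.norm_eq_abs]
  rw [h2] at h1
  have h3 : 2 * C / d * |y - t| ≤ 1 / 4 := by
    calc 2 * C / d * |y - t| ≤ 2 * C / d * (1 / (8 * C) * d) := by gcongr
      _ = 1 / 4 := by field_simp; norm_num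
  have h4 : ‖U (d + y * I)‖ ≤ ‖U (d + y * I) - U (d + t * I)‖ + ‖U (d + t * I)‖ := by
    have := norm_add_le (U (d + y * I) - U (d + t * I)) (U (d + t * I))
    simpa using this
  linarith

theorem glue_lip (f h : ℂ → ℂ) (L : ℝ)
    (hf : ∀ x y : ℂ, 0 ≤ x.re → x.re ≤ 1 → 0 ≤ y.re → y.re ≤ 1 → ‖f x - f y‖ ≤ L * ‖x - y‖)
    (hh : ∀ x y : ℂ, -1 ≤ x.re → x.re ≤ 0 → -1 ≤ y.re → y.re ≤ 0 → ‖h x - h y‖ ≤ L * ‖x - y‖)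
    (hag : ∀ x : ℂ, x.re = 0 → f x = h x) (x y : ℂ) (hx1 : -1 ≤ x.re) (hx2 : x.re ≤ 1)
    (hy1 : -1 ≤ y.re) (hy2 : y.re ≤ 1) :
    ‖(if 0 ≤ x.re then f x else h x) - (if 0 ≤ y.re then f y else h y)‖ ≤ L * ‖x - y‖ := by
  have mixed : ∀ x y : ℂ, 0 ≤ x.re → x.re ≤ 1 → -1 ≤ y.re → y.re < 0 →
      ‖f x - h y‖ ≤ L * ‖x - y‖ := by
    intro x y h1 h2 h3 h4
    set s := x.re / (x.re - y.re) with hs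
    have hpos : 0 < x.re - y.re := by linarith
    have hs0 : 0 ≤ s := by positivity
    have hs1 : s ≤ 1 := by rw [hs, div_le_one hpos]; linarith
    set q : ℂ := x + (s : ℂ) * (y - x) with hq
    have hqre : q.re = 0 := by
      simp only [hq, hs, add_re, re_ofReal_mul, sub_re]
      field_simp; ring
    have e1 : ‖x - q‖ = s * ‖x - y‖ := by
      have : x - q = (s : ℂ) * (x - y) := by rw [hq]; ring
      rw [this, norm_mul, Complex.norm_real, Real.norm_of_nonneg hs0]
    have e2 : ‖q - y‖ = (1 - s) * ‖x - y‖ := by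
      have : q - y = ((1 - s : ℝ) : ℂ) * (x - y) := by rw [hq]; push_cast; ring
      rw [this, norm_mul, Complex.norm_real, Real.norm_of_nonneg (by linarith)]
    have a1 := hf x q h1 h2 hqre.ge (by linarith)
    have a2 := hh q y (by linarith) hqre.le h3 h4.le
    rw [hag q hqre] at a1
    have : f x - h y = (f x - h q) + (h q - h y) := by ring
    rw [this]
    refine (norm_add_le _ _).trans ?_
    rw [e1] at a1; rw [e2] at a2
    linarith
  by_cases c1 : 0 ≤ x.re <;> by_cases c2 : 0 ≤ y.re
  · simp only [c1, c2, if_true]; exact hf x y c1 hx2 c2 hy2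
  · simp only [c1, c2, if_true, if_false]; exact mixed x y c1 hx2 hy1 (not_le.1 c2)
  · simp only [c1, c2, if_true, if_false]
    rw [norm_sub_rev, norm_sub_rev x y]; exact mixed y x c2 hy2 hx1 (not_le.1 c1)
  · simp only [c1, c2, if_false]; exact hh x y hx1 (not_le.1 c1).le hy1 (not_le.1 c2).le


theorem conj_inv_of_norm_one (w : ℂ) (h : ‖w‖ = 1) : ((starRingEnd ℂ) w)⁻¹ = w := by
  have : w * (starRingEnd ℂ) w = 1 := by rw [Complex.mul_conj']; simp [h]
  exact (eq_inv_of_mul_eq_one_left this).symm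

theorem inv_sq_lip (a b : ℂ) (ha : 1 / 2 ≤ ‖a‖) (hb : 1 / 2 ≤ ‖b‖) (ha1 : ‖a‖ ≤ 1) (hb1 : ‖b‖ ≤ 1) :
    ‖(a ^ 2)⁻¹ - (b ^ 2)⁻¹‖ ≤ 32 * ‖a - b‖ := by
  have ha0 : a ≠ 0 := by rw [← norm_pos_iff]; linarith
  have hb0 : b ≠ 0 := by rw [← norm_pos_iff]; linarith
  have e : (a ^ 2)⁻¹ - (b ^ 2)⁻¹ = (b - a) * (a + b) * ((a⁻¹) ^ 2 * (b⁻¹) ^ 2) := by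
    field_simp; ring
  have h1 : ‖a⁻¹‖ ≤ 2 := by
    rw [norm_inv]
    calc ‖a‖⁻¹ ≤ (1 / 2)⁻¹ := by gcongr
      _ = 2 := by norm_num
  have h2 : ‖b⁻¹‖ ≤ 2 := by
    rw [norm_inv]
    calc ‖b‖⁻¹ ≤ (1 / 2)⁻¹ := by gcongr
      _ = 2 := by norm_num
  have h3 : ‖a + b‖ ≤ 2 := (norm_add_le _ _).trans (by linarith)
  rw [e, norm_mul, norm_mul, norm_mul, norm_pow, norm_pow, norm_sub_rev b a]
  calc ‖a - b‖ * ‖a + b‖ * (‖a⁻¹‖ ^ 2 * ‖b⁻¹‖ ^ 2) ≤ ‖a - b‖ * 2 * (2 ^ 2 * 2 ^ 2) := by gcongr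
    _ = 32 * ‖a - b‖ := by ring

theorem inv_sq_bd (a : ℂ) (ha : 1 / 2 ≤ ‖a‖) : ‖(a ^ 2)⁻¹‖ ≤ 4 := by
  rw [norm_inv, norm_pow]
  calc (‖a‖ ^ 2)⁻¹ ≤ ((1 / 2) ^ 2)⁻¹ := by gcongr
    _ = 4 := by norm_num

/-- derivative of the reflected map -/
noncomputable def reflD (U : ℂ → ℂ) (U' : ℂ → (ℂ →L[ℝ] ℂ)) (x : ℂ) : ℂ →L[ℝ] ℂ :=
  (((starRingEnd ℂ) (U (-(starRingEnd ℂ) x))) ^ 2)⁻¹ •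
    ((conjCLE : ℂ →L[ℝ] ℂ).comp ((U' (-(starRingEnd ℂ) x)).comp (conjCLE : ℂ →L[ℝ] ℂ)))

theorem reflD_apply (U : ℂ → ℂ) (U' : ℂ → (ℂ →L[ℝ] ℂ)) (x h : ℂ) : reflD U U' x h =
    (((starRingEnd ℂ) (U (-(starRingEnd ℂ) x))) ^ 2)⁻¹ *
      (starRingEnd ℂ) (U' (-(starRingEnd ℂ) x) ((starRingEnd ℂ) h)) := by
  simp [reflD]

theorem HSol.reflDer {G : ℝ → ℂ → ℂ} {U : ℂ → ℂ} {U' : ℂ → (ℂ →L[ℝ] ℂ)} (h : HSol G U U')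
    (x : ℂ) (hx : x.re ≤ 0) (hne : U (-(starRingEnd ℂ) x) ≠ 0) :
    HasFDerivWithinAt (fun x => ((starRingEnd ℂ) (U (-(starRingEnd ℂ) x)))⁻¹) (reflD U U' x)
      {x : ℂ | x.re ≤ 0} x := by
  have h1 : HasFDerivWithinAt (fun x : ℂ => -(starRingEnd ℂ) x) (-(conjCLE : ℂ →L[ℝ] ℂ))
      {x : ℂ | x.re ≤ 0} x := ((conjCLE : ℂ →L[ℝ] ℂ).hasFDerivAt (x := x)).neg.hasFDerivWithinAt
  have h2 := (h.der (-(starRingEnd ℂ) x) (by simpa using hx)).comp x h1 (by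
    intro y hy
    simp only [mem_ofPred_eq] at *
    simpa using hy)
  have h3 := ((conjCLE : ℂ →L[ℝ] ℂ).hasFDerivAt (x := U (-(starRingEnd ℂ) x))).comp_hasFDerivWithinAt x h2
  have h4 := ((hasDerivAt_inv (x := (starRingEnd ℂ) (U (-(starRingEnd ℂ) x)))
    (by simpa using hne)).hasFDerivAt.restrictScalars ℝ).comp_hasFDerivWithinAt x h3
  refine h4.congr_fderiv ?_
  ext1 c
  rw [reflD_apply]
  simp
  ring

theorem HSol.reflD_bdry {K Λ : ℝ} {G : ℝ → ℂ → ℂ} (hG : GoodG K Λ G) {U : ℂ → ℂ}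
    {U' : ℂ → (ℂ →L[ℝ] ℂ)} (h : HSol G U U')
    (x : ℂ) (hx : x.re = 0) : reflD U U' x = U' x := by
  have hxx : -(starRingEnd ℂ) x = x := by apply Complex.ext <;> simp [hx]
  have hU := h.bdry x hx
  have hconj : ((starRingEnd ℂ) (U x))⁻¹ = U x := conj_inv_of_norm_one _ hU
  have hone : U x * (starRingEnd ℂ) (U x) = 1 := by rw [Complex.mul_conj']; simp [hU]
  -- tangential derivative
  have ht : (starRingEnd ℂ) (U' x I) * U x + (starRingEnd ℂ) (U x) * U' x I = 0 := by
    have hγ : HasDerivAt (fun t : ℝ => U (x + t * I)) (U' x I) 0 := by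
      have h0 : HasDerivAt (fun t : ℝ => x + t * I) I 0 := by
        simpa using ((hasDerivAt_id (0:ℝ)).ofReal_comp.mul_const I).const_add x
      have h1 : HasFDerivWithinAt U (U' x) {x : ℂ | 0 ≤ x.re} (x + (0:ℝ) * I) := by
        simpa using h.der x hx.ge
      exact h1.comp_hasDerivAt (0:ℝ) h0 (Eventually.of_forall fun t => by simp [hx])
    have h2 := ((conjCLE : ℂ →L[ℝ] ℂ).hasFDerivAt.comp_hasDerivAt (0:ℝ) hγ).mul hγ
    have h3 : (fun t : ℝ => (starRingEnd ℂ) (U (x + t * I)) * U (x + t * I)) = fun _ => 1 := by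
      ext1 t
      rw [Complex.conj_mul', h.bdry _ (by simp [hx])]; simp
    have h4 : HasDerivAt (fun t : ℝ => (starRingEnd ℂ) (U (x + t * I)) * U (x + t * I)) 
       ((starRingEnd ℂ) (U' x I) * U x + (starRingEnd ℂ) (U x) * U' x I) 0 := by
      refine HasDerivAt.congr_deriv (f := fun t : ℝ => (starRingEnd ℂ) (U (x + t * I)) * U (x + t * I)) h2 ?_
      simp
    rw [h3] at h4
    exact h4.unique (hasDerivAt_const _ _)
  have htI : U' x I = - (U x) ^ 2 * (starRingEnd ℂ) (U' x I) := by
    linear_combination U x * ht - U' x I * hone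
  have heq := h.eqn x hx.ge
  have htang := hG.tang x.im (U x) hU
  have hinv : (((starRingEnd ℂ) (U x)) ^ 2)⁻¹ = (U x) ^ 2 := by rw [← inv_pow, hconj]
  apply realLin_ext
  · rw [reflD_apply, hxx, hinv, map_one]
    have h1 : U' x 1 = G x.im (U x) - I * U' x I := by linear_combination heq
    rw [h1, map_sub, map_mul, conj_I]
    linear_combination htang + I * htI
  · rw [reflD_apply, hxx, hinv, conj_I, map_neg, map_neg]
    linear_combination -htI

/-- Bootstrapping estimate up to the boundary. -/
theorem HSol.boot {K Λ : ℝ} {G : ℝ → ℂ → ℂ} (hG : GoodG K Λ G) {U : ℂ → ℂ}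
    {U' : ℂ → (ℂ →L[ℝ] ℂ)} (h : HSol G U U')
    (hlow : ∀ x : ℂ, 0 ≤ x.re → x.re ≤ 1 → 1 / 2 ≤ ‖U x‖)
    (M : ℝ) (hM0 : 0 ≤ M) (hM : ∀ x : ℂ, 0 ≤ x.re → ‖U' x‖ ≤ M) (p : ℂ) (hp : 0 ≤ p.re) :
    ‖U' p‖ ≤ (4 * (10 + 8 * Λ + 2 * K) + 4 * (1 + 4 * Λ + 32 * K) + 1 + K) + M / 2 := by
  have hK := hG.K0
  have hΛ := hG.L0
  rcases lt_or_ge (1 / 4) p.re with hp4 | hp4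
  · have := h.interior hG p (1 / 4) (by norm_num) (by norm_num) hp4
    have e : (10 + 8 * Λ + 2 * K) / (1 / 4) = 4 * (10 + 8 * Λ + 2 * K) := by ring
    rw [e] at this
    have : 0 ≤ 4 * (1 + 4 * Λ + 32 * K) + 1 + K + M / 2 := by positivity
    linarith
  set D := 1 + 4 * Λ + 32 * K with hD
  have hD0 : 1 ≤ D := by rw [hD]; linarith
  have hULip : ∀ x y : ℂ, 0 ≤ x.re → 0 ≤ y.re → ‖U x - U y‖ ≤ M * ‖x - y‖ := by
    intro x y hx hy
    have hconv : Convex ℝ {x : ℂ | 0 ≤ x.re} := convex_halfSpace_re_ge 0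
    exact hconv.norm_image_sub_le_of_norm_hasFDerivWithin_le (f := U) (f' := U')
      (fun z hz => h.der z hz) (fun z hz => hM z hz) hy hx
  set L := D * (1 + M) with hL
  set g : ℂ → ℂ := fun x => G x.im (U x) with hg
  set k : ℂ → ℂ := fun x => (((starRingEnd ℂ) (U (-(starRingEnd ℂ) x))) ^ 2)⁻¹ *
      (starRingEnd ℂ) (g (-(starRingEnd ℂ) x)) with hk
  have hgl0 : ∀ x y : ℂ, 0 ≤ x.re → 0 ≤ y.re → ‖g x - g y‖ ≤ Λ * (1 + M) * ‖x - y‖ := by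
    intro x y hx hy
    refine (h.glip hG x y hx hy).trans ?_
    rw [mul_assoc]
    gcongr
    linarith [hULip x y hx hy]
  have hrefl : ∀ x : ℂ, (-(starRingEnd ℂ) x).re = - x.re := fun x => by simp
  have hglip : ∀ x y : ℂ, 0 ≤ x.re → x.re ≤ 1 → 0 ≤ y.re → y.re ≤ 1 → ‖g x - g y‖ ≤ L * ‖x - y‖ := by
    intro x y hx _ hy _
    refine (hgl0 x y hx hy).trans ?_
    rw [hL]
    gcongr
    rw [hD]; linarith
  have hklip : ∀ x y : ℂ, -1 ≤ x.re → x.re ≤ 0 → -1 ≤ y.re → y.re ≤ 0 → ‖k x - k y‖ ≤ L * ‖x - y‖ := by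
    intro x y hx1 hx2 hy1 hy2
    set x' := -(starRingEnd ℂ) x with hx'
    set y' := -(starRingEnd ℂ) y with hy'
    have hxr : x'.re = - x.re := hrefl x
    have hyr : y'.re = - y.re := hrefl y
    have hdist : ‖x' - y'‖ = ‖x - y‖ := by
      have : x' - y' = -(starRingEnd ℂ) (x - y) := by rw [hx', hy', map_sub]; ring
      rw [this, norm_neg, RCLike.norm_conj]
    have hkx : k x - k y = ((((starRingEnd ℂ) (U x')) ^ 2)⁻¹ - (((starRingEnd ℂ) (U y')) ^ 2)⁻¹) *
        (starRingEnd ℂ) (g x') + (((starRingEnd ℂ) (U y')) ^ 2)⁻¹ * (starRingEnd ℂ) (g x' - g y') := by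
      simp only [hk, map_sub]; ring
    have hx'0 : 0 ≤ x'.re := by linarith
    have hy'0 : 0 ≤ y'.re := by linarith
    have b1 := inv_sq_lip ((starRingEnd ℂ) (U x')) ((starRingEnd ℂ) (U y'))
      (by rw [RCLike.norm_conj]; exact hlow _ hx'0 (by linarith))
      (by rw [RCLike.norm_conj]; exact hlow _ hy'0 (by linarith))
      (by rw [RCLike.norm_conj]; exact h.bd _ hx'0)
      (by rw [RCLike.norm_conj]; exact h.bd _ hy'0)
    rw [← map_sub, RCLike.norm_conj] at b1
    have b2 := inv_sq_bd ((starRingEnd ℂ) (U y'))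
      (by rw [RCLike.norm_conj]; exact hlow _ hy'0 (by linarith))
    have b3 := hULip x' y' hx'0 hy'0
    have b4 := hgl0 x' y' hx'0 hy'0
    have b5 : ‖g x'‖ ≤ K := hG.bound _ _ (h.bd x' hx'0)
    rw [hdist] at b3 b4
    rw [hkx]
    refine (norm_add_le _ _).trans ?_
    rw [norm_mul, norm_mul, RCLike.norm_conj, RCLike.norm_conj]
    calc _ ≤ (32 * (M * ‖x - y‖)) * K + 4 * (Λ * (1 + M) * ‖x - y‖) := by
          gcongr
          linarith
      _ ≤ L * ‖x - y‖ := by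
          have e : L * ‖x - y‖ - ((32 * (M * ‖x - y‖)) * K + 4 * (Λ * (1 + M) * ‖x - y‖)) =
            ((1 + M) + 32 * K) * ‖x - y‖ := by rw [hL, hD]; ring
          have : 0 ≤ ((1 + M) + 32 * K) * ‖x - y‖ := by positivity
          linarith
  have hagree : ∀ x : ℂ, x.re = 0 → g x = k x := by
    intro x hx
    have hxx : -(starRingEnd ℂ) x = x := by apply Complex.ext <;> simp [hx]
    have hU := h.bdry x hx
    simp only [hk, hxx]
    rw [← inv_pow, conj_inv_of_norm_one _ hU, mul_comm]
    exact (hG.tang x.im (U x) hU).symm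
  have hglue := glue_lip g k L hglip hklip hagree
  set W : ℂ → ℂ := fun x => ((starRingEnd ℂ) (U (-(starRingEnd ℂ) x)))⁻¹ with hW
  set V : ℂ → ℂ := fun x => if 0 ≤ x.re then U x else W x with hV
  set V' : ℂ → (ℂ →L[ℝ] ℂ) := fun x => if 0 ≤ x.re then U' x else reflD U U' x with hV'
  set gg : ℂ → ℂ := fun x => if 0 ≤ x.re then g x else k x with hgg
  have hVU : ∀ x : ℂ, 0 ≤ x.re → V x = U x := fun x hx => by simp only [hV, hx, if_true]
  have hVW : ∀ x : ℂ, x.re ≤ 0 → V x = W x := by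
    intro x hx
    rcases hx.lt_or_eq with h1 | h1
    · simp only [hV, not_le.2 h1, if_false]
    · have hxx : -(starRingEnd ℂ) x = x := by apply Complex.ext <;> simp [h1]
      rw [hVU x h1.ge]
      simp only [hW, hxx]
      exact (conj_inv_of_norm_one _ (h.bdry x h1)).symm
  have hVder : ∀ x : ℂ, -1 ≤ x.re → HasFDerivAt V (V' x) x := by
    intro x hx
    rcases lt_trichotomy x.re 0 with h1 | h1 | h1
    · have e : V' x = reflD U U' x := by simp only [hV', not_le.2 h1, if_false]
      rw [e]
      have hne : U (-(starRingEnd ℂ) x) ≠ 0 := by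
        rw [← norm_pos_iff]
        have := hlow (-(starRingEnd ℂ) x) (by rw [hrefl]; linarith) (by rw [hrefl]; linarith)
        linarith
      have hopen : IsOpen {x : ℂ | x.re < 0} := isOpen_lt Complex.continuous_re continuous_const
      have h2 : HasFDerivAt W (reflD U U' x) x := (h.reflDer x h1.le hne).hasFDerivAt
        (Filter.mem_of_superset (hopen.mem_nhds h1) (fun y hy => by
          simp only [mem_ofPred_eq] at *; exact le_of_lt hy))
      exact h2.congr_of_eventuallyEq (Filter.mem_of_superset (hopen.mem_nhds h1) (fun y hy => by
          simp only [mem_ofPred_eq] at *; exact hVW y hy.le))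
    · have e : V' x = U' x := by simp only [hV', h1.ge, if_true]
      rw [e]
      have hne : U (-(starRingEnd ℂ) x) ≠ 0 := by
        rw [← norm_pos_iff]
        have := hlow (-(starRingEnd ℂ) x) (by rw [hrefl]; linarith) (by rw [hrefl]; linarith)
        linarith
      have d1 : HasFDerivWithinAt V (U' x) {x : ℂ | 0 ≤ x.re} x :=
        (h.der x h1.ge).congr (fun y hy => hVU y hy) (hVU x h1.ge)
      have d2 : HasFDerivWithinAt V (U' x) {x : ℂ | x.re ≤ 0} x := by
        have := h.reflDer x h1.le hne
        rw [h.reflD_bdry hG x h1] at this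
        exact this.congr (fun y hy => hVW y hy) (hVW x h1.le)
      have d3 := d1.union d2
      have : {x : ℂ | 0 ≤ x.re} ∪ {x : ℂ | x.re ≤ 0} = univ := by
        ext y; simp [le_total]
      rw [this] at d3
      exact hasFDerivWithinAt_univ.1 d3
    · have e : V' x = U' x := by simp only [hV', h1.le, if_true]
      rw [e]
      have hopen : IsOpen {x : ℂ | 0 < x.re} := isOpen_lt continuous_const Complex.continuous_re
      exact (h.derAt x h1).congr_of_eventuallyEq (Filter.mem_of_superset (hopen.mem_nhds h1)
        (fun y hy => by simp only [mem_ofPred_eq] at *; exact hVU y hy.le))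
  have hVeq : ∀ x : ℂ, V' x 1 + I * V' x I = gg x := by
    intro x
    by_cases hx : 0 ≤ x.re
    · simp only [hV', hgg, hx, if_true]; exact h.eqn x hx
    · simp only [hV', hgg, hx, if_false, reflD_apply, map_one, conj_I, map_neg]
      have := h.eqn (-(starRingEnd ℂ) x) (by rw [hrefl]; linarith [not_le.1 hx])
      simp only [hk, hg, ← this, map_add, map_mul, conj_I]
      ring
  have hVbd : ∀ x : ℂ, -1 ≤ x.re → ‖V x‖ ≤ 2 := by
    intro x hx
    by_cases hx0 : 0 ≤ x.re
    · rw [hVU x hx0]; linarith [h.bd x hx0]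
    · have hx1 := (not_le.1 hx0).le
      rw [hVW x hx1]
      simp only [hW]
      rw [norm_inv, RCLike.norm_conj]
      have := hlow (-(starRingEnd ℂ) x) (by rw [hrefl]; linarith) (by rw [hrefl]; linarith)
      calc _ ≤ (1 / 2 : ℝ)⁻¹ := by gcongr
        _ = 2 := by norm_num
  set ρ := 1 / (2 * D) with hρ
  have hρ0 : 0 < ρ := by positivity
  have hρ1 : ρ ≤ 1 / 2 := by rw [hρ]; gcongr; linarith
  have hstrip : ∀ x ∈ Metric.closedBall p ρ, -1 ≤ x.re ∧ x.re ≤ 1 := by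
    intro x hx
    have h1 : ‖x - p‖ ≤ ρ := by simpa [dist_eq_norm] using hx
    have h2 := (Complex.abs_re_le_norm (x - p)).trans h1
    rw [abs_le, Complex.sub_re] at h2
    constructor <;> linarith
  have hps := hstrip p (Metric.mem_closedBall_self hρ0.le)
  have hL0 : 0 ≤ L := by positivity
  have hfin := lin_est' V gg V' p ρ 2 L K hρ0 hL0 (fun x hx => hVder x (hstrip x hx).1)
    (fun x _ => hVeq x)
    (by
      have : LipschitzOnWith (Real.toNNReal L) gg (Metric.closedBall p ρ) := by
        refine LipschitzOnWith.of_dist_le_mul fun x hx y hy => ?_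
        rw [dist_eq_norm, dist_eq_norm, Real.coe_toNNReal L hL0]
        exact hglue x y (hstrip x hx).1 (hstrip x hx).2 (hstrip y hy).1 (hstrip y hy).2
      exact this.continuousOn)
    (fun x hx => hglue x p (hstrip x hx).1 (hstrip x hx).2 hps.1 hps.2)
    (fun x hx => hVbd x (hstrip x hx).1)
    (by simp only [hgg, hp, if_true]; exact hG.bound _ _ (h.bd p hp))
  have e1 : V' p = U' p := by simp only [hV', hp, if_true]
  rw [e1] at hfin
  have e2 : 2 / ρ = 4 * D := by rw [hρ]; field_simp; norm_num
  have e3 : L * ρ = (1 + M) / 2 := by rw [hL, hρ]; field_simp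
  rw [e2, e3] at hfin
  have : 0 ≤ 4 * (10 + 8 * Λ + 2 * K) := by positivity
  linarith

/-- Full bound once an a priori bound exists. -/
theorem HSol.full {K Λ : ℝ} {G : ℝ → ℂ → ℂ} (hG : GoodG K Λ G) {U : ℂ → ℂ}
    {U' : ℂ → (ℂ →L[ℝ] ℂ)} (h : HSol G U U')
    (hlow : ∀ x : ℂ, 0 ≤ x.re → x.re ≤ 1 → 1 / 2 ≤ ‖U x‖)
    (hM : ∃ M, ∀ x : ℂ, 0 ≤ x.re → ‖U' x‖ ≤ M) (p : ℂ) (hp : 0 ≤ p.re) :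
    ‖U' p‖ ≤ 2 * (4 * (10 + 8 * Λ + 2 * K) + 4 * (1 + 4 * Λ + 32 * K) + 1 + K) := by
  obtain ⟨M₀, hM₀⟩ := hM
  set B := (4 * (10 + 8 * Λ + 2 * K) + 4 * (1 + 4 * Λ + 32 * K) + 1 + K)
  set T : Set ℝ := Set.image (fun x => ‖U' x‖) {x : ℂ | 0 ≤ x.re} with hT
  have hbdd : BddAbove T := ⟨M₀, by rintro _ ⟨x, hx, rfl⟩; exact hM₀ x hx⟩
  have hle : ∀ x : ℂ, 0 ≤ x.re → ‖U' x‖ ≤ sSup T := fun x hx => le_csSup hbdd ⟨x, hx, rfl⟩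
  have h0 : 0 ≤ sSup T := (norm_nonneg _).trans (hle p hp)
  have h1 : sSup T ≤ B + sSup T / 2 := by
    refine csSup_le (s := T) ⟨‖U' p‖, p, hp, rfl⟩ ?_
    rintro _ ⟨x, hx, rfl⟩
    exact h.boot hG hlow (sSup T) h0 hle x hx
  have := hle p hp
  linarith


theorem fderiv_slice {H : ℝ → ℂ → ℝ} (hH : IsAdmissible H) (t : ℝ) (w v : ℂ) :
    fderiv ℝ (H t) w v = fderiv ℝ (fun p : ℝ × ℂ => H p.1 p.2) (t, w) (0, v) := by
  have h1 : HasFDerivAt (fun p : ℝ × ℂ => H p.1 p.2) (fderiv ℝ (fun p : ℝ × ℂ => H p.1 p.2) (t, w)) (t, w) :=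
    ((hH.smooth.differentiable (by simp)) (t, w)).hasFDerivAt
  have h2 : HasFDerivAt (fun w : ℂ => (t, w)) (ContinuousLinearMap.inr ℝ ℝ ℂ) w :=
    hasFDerivAt_prodMk_right t w
  have h3 : HasFDerivAt (H t) _ w := h1.comp w h2
  rw [h3.fderiv]; simp

theorem XH_contDiff {H : ℝ → ℂ → ℝ} (hH : IsAdmissible H) :
    ContDiff ℝ 1 (fun p : ℝ × ℂ => XH H p.1 p.2) := by
  have h1 : ContDiff ℝ 1 (fderiv ℝ (fun p : ℝ × ℂ => H p.1 p.2)) :=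
    hH.smooth.fderiv_right (by norm_cast)
  have h2 : ∀ v : ℂ, ContDiff ℝ 1 (fun p : ℝ × ℂ => ((fderiv ℝ (H p.1) p.2 v : ℝ) : ℂ)) := by
    intro v
    have e : (fun p : ℝ × ℂ => ((fderiv ℝ (H p.1) p.2 v : ℝ) : ℂ)) =
        fun p => Complex.ofRealCLM (fderiv ℝ (fun p : ℝ × ℂ => H p.1 p.2) p (0, v)) := by
      ext1 p
      rw [fderiv_slice hH]; rfl
    rw [e]
    exact Complex.ofRealCLM.contDiff.comp (h1.clm_apply contDiff_const)
  unfold XH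
  exact contDiff_const.mul ((h2 1).add ((h2 I).mul contDiff_const))

theorem XH_tang {H : ℝ → ℂ → ℝ} (hH : IsAdmissible H) (t : ℝ) (w : ℂ) (hw : ‖w‖ = 1) :
    (starRingEnd ℂ) (I * XH H t w) * w ^ 2 = I * XH H t w := by
  have hone : w * (starRingEnd ℂ) w = 1 := by rw [Complex.mul_conj']; simp [hw]
  have hdiff : HasFDerivAt (H t) (fderiv ℝ (H t) w) w := by
    have : ContDiff ℝ (⊤ : ℕ∞) (H t) := hH.smooth.comp (contDiff_const.prodMk contDiff_id)
    exact ((this.differentiable (by simp)) w).hasFDerivAt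
  have hzero : fderiv ℝ (H t) w (w * I) = 0 := by
    have hγ : HasDerivAt (fun s : ℝ => w * Complex.exp (s * I)) (w * I) 0 := by
      have := (((hasDerivAt_id (0:ℝ)).ofReal_comp.mul_const I).cexp).const_mul w
      simpa using this
    have h1 : HasFDerivAt (H t) (fderiv ℝ (H t) w) (w * Complex.exp ((0:ℝ) * I)) := by simpa using hdiff
    have h2 := h1.comp_hasDerivAt (0:ℝ) hγ
    have h3 : (H t ∘ fun s : ℝ => w * Complex.exp (s * I)) = fun _ => H t w := by
      ext1 s
      apply hH.bdry_const t _ _ _ hw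
      rw [norm_mul, hw, Complex.norm_exp_ofReal_mul_I, mul_one]
    rw [h3] at h2
    exact h2.unique (hasDerivAt_const _ _)
  have hlin : fderiv ℝ (H t) w (w * I) = -w.im * fderiv ℝ (H t) w 1 + w.re * fderiv ℝ (H t) w I := by
    have : w * I = (-w.im) • (1:ℂ) + w.re • I := by apply Complex.ext <;> simp
    rw [this, map_add, map_smul, map_smul]; simp
  rw [hzero] at hlin
  set a := fderiv ℝ (H t) w 1
  set b := fderiv ℝ (H t) w I
  have hX : I * XH H t w = -((a:ℂ) + b * I) := by
    simp only [XH]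
    linear_combination ((a:ℂ) + b * I) * I_sq
  have hreal : (starRingEnd ℂ) (I * XH H t w) * w = (I * XH H t w) * (starRingEnd ℂ) w := by
    rw [hX]
    apply Complex.ext
    · simp
    · simp; linarith
  rw [pow_two, ← mul_assoc, hreal, mul_assoc, mul_comm _ w, hone, mul_one]

theorem XH_good {H : ℝ → ℂ → ℝ} (hH : IsAdmissible H) :
    ∃ K Λ : ℝ, ∀ τ : ℝ, GoodG K Λ (fun t w => I * XH H (t + τ) w) := by
  set F : ℝ × ℂ → ℂ := fun p => XH H p.1 p.2 with hF
  have hFc := XH_contDiff hH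
  have hper : ∀ p : ℝ × ℂ, F (p + (1, 0)) = F p := by
    intro p
    have : H (p.1 + 1) = H p.1 := by ext z; exact hH.periodic _ _
    simp [hF, XH, this]
  have hper' : ∀ p : ℝ × ℂ, fderiv ℝ F (p + (1, 0)) = fderiv ℝ F p := by
    intro p
    rw [← fderiv_comp_add_right]
    congr 1
    ext1 q; exact hper q
  have hcomp : IsCompact (Icc (0:ℝ) 1 ×ˢ Metric.closedBall (0:ℂ) 1) :=
    isCompact_Icc.prod (isCompact_closedBall _ _)
  obtain ⟨K, hK⟩ := hcomp.exists_bound_of_continuousOn hFc.continuous.continuousOn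
  obtain ⟨Λ, hΛ⟩ := hcomp.exists_bound_of_continuousOn
    (hFc.continuous_fderiv (by simp)).continuousOn
  have hK' : ∀ t w, ‖w‖ ≤ 1 → ‖F (t, w)‖ ≤ K := by
    intro t w hw
    have hp : Function.Periodic (fun t => F (t, w)) 1 := fun t => by simpa using hper (t, w)
    obtain ⟨y, hy, e⟩ := hp.exists_mem_Ico₀ one_pos t
    rw [e]
    exact hK _ ⟨⟨hy.1, hy.2.le⟩, by simpa using hw⟩
  have hΛ' : ∀ t w, ‖w‖ ≤ 1 → ‖fderiv ℝ F (t, w)‖ ≤ Λ := by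
    intro t w hw
    have hp : Function.Periodic (fun t => fderiv ℝ F (t, w)) 1 := fun t => by simpa using hper' (t, w)
    obtain ⟨y, hy, e⟩ := hp.exists_mem_Ico₀ one_pos t
    rw [e]
    exact hΛ _ ⟨⟨hy.1, hy.2.le⟩, by simpa using hw⟩
  have hK0 : 0 ≤ K := (norm_nonneg _).trans (hK' 0 0 (by simp))
  have hΛ0 : 0 ≤ Λ := (norm_nonneg _).trans (hΛ' 0 0 (by simp))
  refine ⟨K, Λ, fun τ => ⟨hK0, hΛ0, ?_, ?_, ?_⟩⟩
  · intro t w hw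
    rw [norm_mul, norm_I, one_mul]; exact hK' _ _ hw
  · intro t t' w w' hw hw'
    rw [← mul_sub, norm_mul, norm_I, one_mul]
    have hconv : Convex ℝ ((univ : Set ℝ) ×ˢ Metric.closedBall (0:ℂ) 1) :=
      convex_univ.prod (convex_closedBall _ _)
    have := hconv.norm_image_sub_le_of_norm_hasFDerivWithin_le (f := F) (f' := fderiv ℝ F) (C := Λ)
      (x := (t' + τ, w')) (y := (t + τ, w))
      (fun x _ => ((hFc.differentiable (by simp)) x).hasFDerivAt.hasFDerivWithinAt)
      (fun x hx => hΛ' x.1 x.2 (by simpa using hx.2))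
      ⟨mem_univ _, by simpa using hw'⟩ ⟨mem_univ _, by simpa using hw⟩
    refine this.trans ?_
    gcongr
    rw [Prod.mk_sub_mk, Prod.norm_mk]
    have e : t + τ - (t' + τ) = t - t' := by ring
    rw [e, Real.norm_eq_abs]
    exact max_le (by linarith [norm_nonneg (w - w')]) (by linarith [abs_nonneg (t - t')])
  · intro t w hw
    exact XH_tang hH _ _ hw


theorem halfPlane_uniqueDiff_s7 (S : ℝ) : UniqueDiffOn ℝ (HalfPlaneFrom S) :=
  (uniqueDiffOn_Ici S).prod uniqueDiffOn_univ

theorem mem_halfPlane {S : ℝ} {p : ℝ × ℝ} : p ∈ HalfPlaneFrom S ↔ S ≤ p.1 := by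
  simp [HalfPlaneFrom]

/-- the solution in complex coordinates -/
noncomputable def cU (S : ℝ) (z : ℝ × ℝ → ℂ) (x : ℂ) : ℂ := z (S + x.re, x.im)

noncomputable def cU' (S : ℝ) (z : ℝ × ℝ → ℂ) (x : ℂ) : ℂ →L[ℝ] ℂ :=
  (fderivWithin ℝ z (HalfPlaneFrom S) (S + x.re, x.im)).comp
    (equivRealProdCLM : ℂ →L[ℝ] ℝ × ℝ)

theorem cU'_one (S : ℝ) (z : ℝ × ℝ → ℂ) (x : ℂ) :
    cU' S z x 1 = pds (HalfPlaneFrom S) z (S + x.re, x.im) := by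
  simp [cU', pds]

theorem cU'_I (S : ℝ) (z : ℝ × ℝ → ℂ) (x : ℂ) :
    cU' S z x I = pdt (HalfPlaneFrom S) z (S + x.re, x.im) := by
  simp [cU', pdt]

theorem mk_hsol (H : ℝ → ℂ → ℝ) (S τ : ℝ) (z : ℝ × ℝ → ℂ)
    (hz_smooth : ContDiffOn ℝ (⊤ : ℕ∞) z (HalfPlaneFrom S))
    (hz_disk : ∀ p ∈ HalfPlaneFrom S, z p ∈ Disk)
    (hfloer : ∀ p ∈ HalfPlaneFrom S,
      pds (HalfPlaneFrom S) z p +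
        Complex.I * (pdt (HalfPlaneFrom S) z p - XH H (p.2 + τ) (z p)) = 0)
    (hbdry : ∀ t : ℝ, ‖z (S, t)‖ = 1) :
    HSol (fun t w => I * XH H (t + τ) w) (cU S z) (cU' S z) := by
  have hmem : ∀ x : ℂ, 0 ≤ x.re → ((S + x.re, x.im) : ℝ × ℝ) ∈ HalfPlaneFrom S := by
    intro x hx
    rw [mem_halfPlane]; simpa using hx
  refine ⟨?_, ?_, ?_, ?_, ?_⟩
  · intro x hx
    have h1 : HasFDerivWithinAt z (fderivWithin ℝ z (HalfPlaneFrom S) (S + x.re, x.im))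
        (HalfPlaneFrom S) (S + x.re, x.im) :=
      ((hz_smooth.differentiableOn (by simp)) _ (hmem x hx)).hasFDerivWithinAt
    have h2 : HasFDerivWithinAt (fun x : ℂ => ((S + x.re, x.im) : ℝ × ℝ))
        (equivRealProdCLM : ℂ →L[ℝ] ℝ × ℝ) {x : ℂ | 0 ≤ x.re} x := by
      have := ((equivRealProdCLM : ℂ →L[ℝ] ℝ × ℝ).hasFDerivAt (x := x)).const_add ((S, 0) : ℝ × ℝ)
      have e : (fun x : ℂ => ((S + x.re, x.im) : ℝ × ℝ)) =
          fun x => ((S, 0) : ℝ × ℝ) + (equivRealProdCLM : ℂ →L[ℝ] ℝ × ℝ) x := by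
        ext1 x; simp
      rw [e]
      exact this.hasFDerivWithinAt
    exact h1.comp x h2 (fun y hy => hmem y hy)
  · have h1 : ContinuousOn (fderivWithin ℝ z (HalfPlaneFrom S)) (HalfPlaneFrom S) :=
      hz_smooth.continuousOn_fderivWithin (halfPlane_uniqueDiff_s7 S) (by simp)
    have h2 : ContinuousOn (fun x : ℂ => fderivWithin ℝ z (HalfPlaneFrom S) (S + x.re, x.im))
        {x : ℂ | 0 ≤ x.re} := h1.comp (by fun_prop) (fun y hy => hmem y hy)
    exact h2.clm_comp continuousOn_const
  · intro x hx
    simpa [Disk, cU] using hz_disk _ (hmem x hx)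
  · intro x hx
    rw [cU'_one, cU'_I]
    have := hfloer _ (hmem x hx)
    simp only [cU]
    linear_combination this
  · intro x hx
    simp only [cU, hx, add_zero]; exact hbdry _

theorem line_energy (S d y : ℝ) (hd : 0 < d) (z : ℝ × ℝ → ℂ)
    (hz_smooth : ContDiffOn ℝ (⊤ : ℕ∞) z (HalfPlaneFrom S))
    (h1 : ‖z (S, y)‖ = 1) (h2 : ‖z (S + d, y)‖ ≤ 3 / 4) :
    ENNReal.ofReal (1 / (16 * d)) ≤
      ∫⁻ s in Icc S (S + d), ENNReal.ofReal (‖pds (HalfPlaneFrom S) z (s, y)‖ ^ 2) := by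
  set φ' : ℝ → ℂ := fun s => pds (HalfPlaneFrom S) z (s, y) with hφ'
  have hle : S ≤ S + d := by linarith
  have hcF : ContinuousOn (fderivWithin ℝ z (HalfPlaneFrom S)) (HalfPlaneFrom S) :=
    hz_smooth.continuousOn_fderivWithin (halfPlane_uniqueDiff_s7 S) (by simp)
  have hmaps : MapsTo (fun s : ℝ => ((s, y) : ℝ × ℝ)) (Icc S (S + d)) (HalfPlaneFrom S) := by
    intro s hs
    rw [mem_halfPlane]; exact hs.1
  have hc : ContinuousOn φ' (Icc S (S + d)) := by
    have : ContinuousOn (fun s : ℝ => fderivWithin ℝ z (HalfPlaneFrom S) (s, y)) (Icc S (S + d)) :=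
      hcF.comp (by fun_prop) hmaps
    exact this.clm_apply continuousOn_const
  have hder : ∀ s ∈ Ioo S (S + d), HasDerivAt (fun s => z (s, y)) (φ' s) s := by
    intro s hs
    have hm : ((s, y) : ℝ × ℝ) ∈ HalfPlaneFrom S := hmaps ⟨hs.1.le, hs.2.le⟩
    have a1 : HasFDerivWithinAt z (fderivWithin ℝ z (HalfPlaneFrom S) (s, y)) (HalfPlaneFrom S) (s, y) :=
      ((hz_smooth.differentiableOn (by simp)) _ hm).hasFDerivWithinAt
    have a2 : HasDerivAt (fun s : ℝ => ((s, y) : ℝ × ℝ)) (1, 0) s :=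
      (hasDerivAt_id s).prodMk (hasDerivAt_const s y)
    refine a1.comp_hasDerivAt s a2 ?_
    filter_upwards [Ioi_mem_nhds hs.1] with r hr
    rw [mem_halfPlane]; exact le_of_lt hr
  have hcz : ContinuousOn (fun s => z (s, y)) (Icc S (S + d)) :=
    hz_smooth.continuousOn.comp (by fun_prop) hmaps
  have hii : IntervalIntegrable φ' volume S (S + d) := by
    apply ContinuousOn.intervalIntegrable
    rwa [uIcc_of_le hle]
  have hftc := intervalIntegral.integral_eq_sub_of_hasDerivAt_of_le hle hcz hder hii
  have hn : 1 / 4 ≤ ∫ s in S..(S + d), ‖φ' s‖ := by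
    have := intervalIntegral.norm_integral_le_integral_norm (f := φ') (μ := volume) hle
    rw [hftc] at this
    have h3 := norm_sub_norm_le (z (S, y)) (z (S + d, y))
    rw [norm_sub_rev] at h3
    linarith
  have hcn : ContinuousOn (fun s => ‖φ' s‖) (uIcc S (S + d)) := by
    rw [uIcc_of_le hle]; exact hc.norm
  have hi1 : IntervalIntegrable (fun s => ‖φ' s‖) volume S (S + d) := hcn.intervalIntegrable
  have hi2 : IntervalIntegrable (fun s => ‖φ' s‖ ^ 2) volume S (S + d) := (hcn.pow 2).intervalIntegrable
  set l := 1 / (4 * d) with hl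
  have hl0 : 0 < l := by positivity
  have hsq : 2 * l * (∫ s in S..(S + d), ‖φ' s‖) - l ^ 2 * d ≤ ∫ s in S..(S + d), ‖φ' s‖ ^ 2 := by
    have e : 2 * l * (∫ s in S..(S + d), ‖φ' s‖) - l ^ 2 * d =
        ∫ s in S..(S + d), (2 * l * ‖φ' s‖ - l ^ 2) := by
      rw [intervalIntegral.integral_sub (hi1.const_mul _) (by simp), intervalIntegral.integral_const_mul]
      simp; ring
    rw [e]
    apply intervalIntegral.integral_mono_on hle ((hi1.const_mul _).sub (by simp)) hi2
    intro s _
    nlinarith [sq_nonneg (‖φ' s‖ - l)]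
  have hfin : 1 / (16 * d) ≤ ∫ s in S..(S + d), ‖φ' s‖ ^ 2 := by
    refine le_trans ?_ hsq
    have : 2 * l * (1 / 4) ≤ 2 * l * (∫ s in S..(S + d), ‖φ' s‖) := by gcongr
    have e : 1 / (16 * d) = 2 * l * (1 / 4) - l ^ 2 * d := by rw [hl]; field_simp; norm_num
    linarith
  have hintg : Integrable (fun s => ‖φ' s‖ ^ 2) (volume.restrict (Icc S (S + d))) :=
    (hc.norm.pow 2).integrableOn_Icc
  rw [← ofReal_integral_eq_lintegral_ofReal hintg (Eventually.of_forall fun s => by positivity)]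
  apply ENNReal.ofReal_le_ofReal
  rw [integral_Icc_eq_integral_Ioc, ← intervalIntegral.integral_of_le hle]
  exact hfin

theorem energy_lower (H : ℝ → ℂ → ℝ) (S τ : ℝ) (n : ℕ) (z : ℝ × ℝ → ℂ) (d a δ : ℝ)
    (hd : 0 < d) (hδ : 0 ≤ δ) (ha : 0 < a) (han : a + δ * d ≤ n)
    (hz_smooth : ContDiffOn ℝ (⊤ : ℕ∞) z (HalfPlaneFrom S))
    (hbdry : ∀ t : ℝ, ‖z (S, t)‖ = 1)
    (hin : ∀ y ∈ Icc a (a + δ * d), ‖z (S + d, y)‖ ≤ 3 / 4) :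
    ENNReal.ofReal (δ / 32) ≤ floerEnergyFrom H S n τ z := by
  have hsub : Icc S (S + d) ×ˢ Icc a (a + δ * d) ⊆ Ici S ×ˢ Ioc (0:ℝ) (n:ℝ) := by
    rintro ⟨s, y⟩ ⟨hs, hy⟩
    exact ⟨hs.1, ha.trans_le hy.1, hy.2.trans han⟩
  have hcF : ContinuousOn (fderivWithin ℝ z (HalfPlaneFrom S)) (HalfPlaneFrom S) :=
    hz_smooth.continuousOn_fderivWithin (halfPlane_uniqueDiff_s7 S) (by simp)
  have hc : ContinuousOn (fun p => pds (HalfPlaneFrom S) z p) (Icc S (S + d) ×ˢ Icc a (a + δ * d)) := by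
    have := hcF.mono (s := HalfPlaneFrom S) (t := Icc S (S + d) ×ˢ Icc a (a + δ * d)) (by
      rintro ⟨s, y⟩ ⟨hs, _⟩
      rw [mem_halfPlane]; exact hs.1)
    exact this.clm_apply continuousOn_const
  have hmeas : AEMeasurable (fun p : ℝ × ℝ => ENNReal.ofReal (‖pds (HalfPlaneFrom S) z p‖ ^ 2))
      ((volume.restrict (Icc S (S + d))).prod (volume.restrict (Icc a (a + δ * d)))) := by
    rw [Measure.prod_restrict]
    exact ((hc.norm.pow 2).aemeasurable (measurableSet_Icc.prod measurableSet_Icc)).ennreal_ofReal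
  have hprod : ENNReal.ofReal (δ / 16) ≤ ∫⁻ p in Icc S (S + d) ×ˢ Icc a (a + δ * d),
      ENNReal.ofReal (‖pds (HalfPlaneFrom S) z p‖ ^ 2) := by
    rw [Measure.volume_eq_prod, ← Measure.prod_restrict, lintegral_prod_symm _ hmeas]
    calc ENNReal.ofReal (δ / 16) = ∫⁻ _ in Icc a (a + δ * d), ENNReal.ofReal (1 / (16 * d)) := by
          rw [setLIntegral_const, Real.volume_Icc, ← ENNReal.ofReal_mul (by positivity)]
          congr 1
          field_simp; ring
      _ ≤ _ := by
          apply setLIntegral_mono' measurableSet_Icc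
          intro y hy
          exact line_energy S d y hd z hz_smooth (hbdry y) (hin y hy)
  unfold floerEnergyFrom
  calc ENNReal.ofReal (δ / 32) = (1/2 : ℝ≥0∞) * ENNReal.ofReal (δ / 16) := by
        have : (1/2 : ℝ≥0∞) = ENNReal.ofReal (1 / 2) := by
          rw [ENNReal.ofReal_div_of_pos (by norm_num)]; simp
        rw [this, ← ENNReal.ofReal_mul (by norm_num)]
        congr 1; ring
    _ ≤ _ := by
        gcongr
        refine hprod.trans ((lintegral_mono fun p => ?_).trans (lintegral_mono_set hsub))
        apply ENNReal.ofReal_le_ofReal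
        have := sq_nonneg ‖pdt (HalfPlaneFrom S) z p - XH H (p.2 + τ) (z p)‖
        linarith

theorem apriori {K Λ : ℝ} {G : ℝ → ℂ → ℂ} (hG : GoodG K Λ G) {U : ℂ → ℂ}
    {U' : ℂ → (ℂ →L[ℝ] ℂ)} (h : HSol G U U') (n : ℕ) (hn : 1 ≤ n)
    (hper : ∀ x : ℂ, 0 ≤ x.re → U (x + n * I) = U x) :
    ∃ M, ∀ x : ℂ, 0 ≤ x.re → ‖U' x‖ ≤ M := by
  have hper' : ∀ x : ℂ, 0 ≤ x.re → U' (x + n * I) = U' x := by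
    intro x hx
    have hx' : 0 ≤ (x + n * I).re := by simpa using hx
    have h1 : HasFDerivWithinAt (fun y => U (y + n * I)) (U' (x + n * I)) {x : ℂ | 0 ≤ x.re} x := by
      have := (h.der _ hx').comp (f := fun y : ℂ => y + n * I) (f' := ContinuousLinearMap.id ℝ ℂ)
        (s := {x : ℂ | 0 ≤ x.re}) x ((hasFDerivWithinAt_id x _).add_const _) (by
          intro y hy
          simp only [mem_ofPred_eq] at *
          simpa using hy)
      exact this
    have h2 : HasFDerivWithinAt U (U' (x + n * I)) {x : ℂ | 0 ≤ x.re} x :=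
      h1.congr (fun y hy => (hper y hy).symm) (hper x hx).symm
    have huniq : UniqueDiffOn ℝ {x : ℂ | 0 ≤ x.re} := by
      apply uniqueDiffOn_convex (convex_halfSpace_re_ge 0)
      refine ⟨1, ?_⟩
      have hopen : IsOpen {x : ℂ | 0 < x.re} := isOpen_lt continuous_const Complex.continuous_re
      exact interior_maximal (fun y hy => by
        simp only [mem_ofPred_eq] at *; exact le_of_lt hy) hopen (by simp)
    exact (huniq x hx).eq h2 (h.der x hx)
  have hcomp : IsCompact (Icc (0:ℝ) 1 ×ℂ Icc (0:ℝ) n) := IsCompact.reProdIm isCompact_Icc isCompact_Icc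
  obtain ⟨C, hC⟩ := hcomp.exists_bound_of_continuousOn (h.cont.mono (by
    intro x hx
    exact hx.1.1))
  refine ⟨max C ((10 + 8 * Λ + 2 * K) / (1 / 2)), fun x hx => ?_⟩
  rcases le_or_gt x.re 1 with h1 | h1
  · refine le_trans ?_ (le_max_left _ _)
    have hp : Function.Periodic (fun t : ℝ => U' (x.re + t * I)) n := by
      intro t
      have := hper' (x.re + t * I) (by simpa using hx)
      show U' (x.re + ((t + n : ℝ) : ℂ) * I) = U' (x.re + t * I)
      rw [← this]
      congr 1
      push_cast
      ring
    obtain ⟨y, hy, e⟩ := hp.exists_mem_Ico₀ (by exact_mod_cast hn) x.im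
    have e' : U' x = U' (x.re + y * I) := by
      rw [← e, Complex.re_add_im]
    rw [e']
    exact hC _ ⟨by simpa using ⟨hx, h1⟩, by simpa using ⟨hy.1, hy.2.le⟩⟩
  · exact (h.interior hG x (1 / 2) (by norm_num) (by norm_num) (by linarith)).trans (le_max_right _ _)


theorem low_of_energy {K Λ : ℝ} (H : ℝ → ℂ → ℝ) (S τ : ℝ) (n : ℕ) (hn : 1 ≤ n) (z : ℝ × ℝ → ℂ)
    (hG : GoodG K Λ (fun t w => I * XH H (t + τ) w))
    (h : HSol (fun t w => I * XH H (t + τ) w) (cU S z) (cU' S z))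
    (hz_smooth : ContDiffOn ℝ (⊤ : ℕ∞) z (HalfPlaneFrom S))
    (hbdry : ∀ t : ℝ, ‖z (S, t)‖ = 1)
    (hz_per : ∀ s t : ℝ, S ≤ s → z (s, t + n) = z (s, t))
    (hE : floerEnergyFrom H S n τ z < ENNReal.ofReal (1 / (8 * (10 + 8 * Λ + 2 * K)) / 32))
    (x : ℂ) (hx0 : 0 ≤ x.re) (hx1 : x.re ≤ 1) : 1 / 2 ≤ ‖cU S z x‖ := by
  by_contra hlt
  have hlt := not_le.1 hlt
  have hK := hG.K0
  have hΛ := hG.L0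
  set δ := 1 / (8 * (10 + 8 * Λ + 2 * K)) with hδ
  have hδ0 : 0 < δ := by positivity
  have hδ1 : δ ≤ 1 / 80 := by
    rw [hδ]
    apply one_div_le_one_div_of_le (by norm_num); linarith
  set d := x.re with hd
  have hd0 : 0 < d := by
    rcases hx0.eq_or_lt with h0 | h0
    · have := h.bdry x h0.symm
      linarith
    · exact h0
  have hn1 : (1:ℝ) ≤ n := by exact_mod_cast hn
  have hp : Function.Periodic (fun t : ℝ => z (S + d, t)) n := fun t => hz_per _ _ (by linarith)
  obtain ⟨t, ht, e⟩ := hp.exists_mem_Ioc (by linarith : (0:ℝ) < n) x.im 0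
  have ht2 : ‖cU S z (d + t * I)‖ < 1 / 2 := by
    have e2 : cU S z (d + t * I) = cU S z x := by
      simp only [cU]
      simp
      exact e.symm
    rw [e2]; exact hlt
  have hv : ∀ y : ℝ, |y - t| ≤ δ * d → ‖z (S + d, y)‖ ≤ 3 / 4 := by
    intro y hy
    have := h.vert hG d t y hd0 hx1 ht2 hy
    simpa [cU] using this
  have hδd : δ * d ≤ 1 / 80 := by nlinarith
  have hδd0 : 0 < δ * d := by positivity
  rw [zero_add] at ht
  have : ENNReal.ofReal (δ / 32) ≤ floerEnergyFrom H S n τ z := by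
    by_cases hc : t + δ * d ≤ n
    · refine energy_lower H S τ n z d t δ hd0 hδ0.le ht.1 hc hz_smooth hbdry fun y hy => hv y ?_
      rw [abs_le]; constructor <;> linarith [hy.1, hy.2]
    · refine energy_lower H S τ n z d (t - δ * d) δ hd0 hδ0.le (by linarith) (by linarith [ht.2])
        hz_smooth hbdry fun y hy => hv y ?_
      rw [abs_le]; constructor <;> linarith [hy.1, hy.2]
  exact absurd hE (not_lt.2 this)


/-- **Uniform gradient bounds.**  If `z_n : [S_n,∞) × ℝ → D` are `n`-periodic solutions
of the Floer equation with unit-circle boundary values, and the Floer energies tend to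
zero, then the gradients `∇z_n` are bounded uniformly in `n`. -/
theorem uniform_gradient_bounds
    (H : ℝ → ℂ → ℝ) (hH : IsAdmissible H)
    (S : ℕ → ℝ) (τ : ℕ → ℝ) (z : ℕ → ℝ × ℝ → ℂ)
    (hS : ∀ n, 1 ≤ n → S n ≤ 0)
    (hz_smooth : ∀ n, 1 ≤ n → ContDiffOn ℝ (⊤ : ℕ∞) (z n) (HalfPlaneFrom (S n)))
    (hz_disk : ∀ n, 1 ≤ n → ∀ p ∈ HalfPlaneFrom (S n), z n p ∈ Disk)
    (hz_per : ∀ n, 1 ≤ n → ∀ s t : ℝ, S n ≤ s → z n (s, t + n) = z n (s, t))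
    (hfloer : ∀ n, 1 ≤ n → ∀ p ∈ HalfPlaneFrom (S n),
      pds (HalfPlaneFrom (S n)) (z n) p +
        Complex.I * (pdt (HalfPlaneFrom (S n)) (z n) p - XH H (p.2 + τ n) (z n p)) = 0)
    (hbdry : ∀ n, 1 ≤ n → ∀ t : ℝ, ‖z n (S n, t)‖ = 1)
    (hE : Tendsto (fun n => floerEnergyFrom H (S n) n (τ n) (z n)) atTop (nhds 0)) :
    ∃ C : ℝ, 0 < C ∧ ∀ n, 1 ≤ n → ∀ p ∈ HalfPlaneFrom (S n),
      ‖pds (HalfPlaneFrom (S n)) (z n) p‖ ≤ C ∧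
      ‖pdt (HalfPlaneFrom (S n)) (z n) p‖ ≤ C := by
  obtain ⟨K, Λ, hG⟩ := XH_good hH
  have hK := (hG 0).K0
  have hΛ := (hG 0).L0
  have hsol : ∀ n, 1 ≤ n → HSol (fun t w => I * XH H (t + τ n) w) (cU (S n) (z n)) (cU' (S n) (z n)) :=
    fun n hn => mk_hsol H (S n) (τ n) (z n) (hz_smooth n hn) (hz_disk n hn) (hfloer n hn) (hbdry n hn)
  have hap : ∀ n, ∃ M : ℝ, 1 ≤ n → ∀ x : ℂ, 0 ≤ x.re → ‖cU' (S n) (z n) x‖ ≤ M := by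
    intro n
    by_cases hn : 1 ≤ n
    · obtain ⟨M, hM⟩ := apriori (hG (τ n)) (hsol n hn) n hn (fun x hx => by
        simp only [cU]
        simpa using hz_per n hn (S n + x.re) x.im (by linarith))
      exact ⟨M, fun _ => hM⟩
    · exact ⟨0, fun h => absurd h hn⟩
  choose M hM using hap
  set B := 2 * (4 * (10 + 8 * Λ + 2 * K) + 4 * (1 + 4 * Λ + 32 * K) + 1 + K) with hB
  have hB0 : 0 < B := by positivity
  have hev := hE.eventually (gt_mem_nhds
    (show (0:ℝ≥0∞) < ENNReal.ofReal (1 / (8 * (10 + 8 * Λ + 2 * K)) / 32) by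
      rw [ENNReal.ofReal_pos]; positivity))
  obtain ⟨N, hN⟩ := eventually_atTop.1 hev
  have hall : ∀ n, 1 ≤ n → ∀ x : ℂ, 0 ≤ x.re →
      ‖cU' (S n) (z n) x‖ ≤ B + ∑ k ∈ Finset.range N, |M k| := by
    intro n hn x hx
    have hs0 : 0 ≤ ∑ k ∈ Finset.range N, |M k| := Finset.sum_nonneg fun _ _ => abs_nonneg _
    rcases lt_or_ge n N with h | h
    · have h1 := hM n hn x hx
      have h2 := Finset.single_le_sum (f := fun k => |M k|) (fun _ _ => abs_nonneg _) (Finset.mem_range.2 h)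
      have h3 := le_abs_self (M n)
      linarith
    · have hlow := low_of_energy H (S n) (τ n) n hn (z n) (hG (τ n)) (hsol n hn) (hz_smooth n hn)
        (hbdry n hn) (hz_per n hn) (hN n h)
      have := (hsol n hn).full (hG (τ n)) hlow ⟨M n, hM n hn⟩ x hx
      linarith
  refine ⟨B + ∑ k ∈ Finset.range N, |M k|, add_pos_of_pos_of_nonneg hB0
    (Finset.sum_nonneg fun _ _ => abs_nonneg _), fun n hn p hp => ?_⟩
  rw [mem_halfPlane] at hp
  set x : ℂ := ⟨p.1 - S n, p.2⟩ with hx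
  have hxr : x.re = p.1 - S n := rfl
  have hxi : x.im = p.2 := rfl
  have hx0 : 0 ≤ x.re := by rw [hxr]; linarith
  have hpx : ((S n + x.re, x.im) : ℝ × ℝ) = p := by
    rw [hxr, hxi]; ext <;> simp
  have hb := hall n hn x hx0
  constructor
  · rw [← hpx, ← cU'_one]
    refine ((cU' (S n) (z n) x).le_opNorm 1).trans ?_
    simpa using hb
  · rw [← hpx, ← cU'_I]
    refine ((cU' (S n) (z n) x).le_opNorm I).trans ?_
    simpa using hb
end
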